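/- arXiv:0905.3834 — 6 statements merged into one kernel-verified Lean document; each statement's English description precedes it below -/
import Mathlib

section
/- For every natural number n ≥ 1 there exists a function U ∈ C²([0,1]) that solves (1−ρ²)U''(ρ) + (2/ρ − 4ρ)U'(ρ) − 2U(ρ) + U(ρ)³ = 0 for all ρ ∈ (0,1), with U(0) > 0, and such that U has exactly n zeros in the open interval (0,1). -/
/-!
With `A = ρ U` and `ρ = tanh x`, the profile equation becomes `w'' + w³ / sinh² x = 0` for
`w(x) = A(tanh x)` on `(0, ∞)`. The initial conditions are `w(0) = 0`, `w'(0) = c = U(0)`, and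
regularity at `ρ = 1` amounts to `w' → 0` at infinity. The profile is found by shooting in `c`.

Although the equation is singular at `0`, it is Lipschitz along functions with `|w| ≤ C x`, so for
every `c > 0` there is a global trajectory `(w, z)` with `z = w'` (`exists_traj`), depending
continuously on `c` (`Traj.dist_le`). The energy `z² / 2 + w⁴ / (4 sinh² x)` decreases, whence
`|z| ≤ c`. In the `(z, w)` plane the trajectory has a strictly increasing Prüfer angle `θ` with
`θ(0) = 0`, and `w` vanishes exactly where `θ` is a multiple of `π` (`Traj.zero_iff`).

* For large `c`, the trajectory has many zeros near the origin (`many_zeros`). Each zero with large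
  slope is followed by another one at a comparable scale, by comparison with `w'' = -w³ / (4 x²)`,
  and the monotonicity of `sinh² z² / 2 + w⁴ / 4` keeps the slope at the new zero large.
* Since the force is integrable, with tail bounded by a multiple of `Q(x) = 18 / (1 + x²)`, a zero
  at which `z² Q < 1` is the last one (`Traj.ne_zero_of_small`). This covers small `c`, and, for
  bounded `c`, all zeros that are far out.

Let `c` be the infimum of the slopes for which `θ` exceeds `(n + 1) π` somewhere. Then `θ` stays
below `(n + 1) π`. If `|z|` exceeded `c³ Q` at some point, then `w` would leave zero for good, an
open condition which excludes an `(n + 1)`-st zero for slopes near `c` (`Traj.escape`,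
`Traj.no_return`). And if `θ` stayed below `n π`, then slopes near `c` would have two zeros far out.
So `|z| ≤ c³ Q` and `w` has exactly `n` zeros (`exists_decaying`, `Traj.encard_zeros`).

Back in the variable `ρ`, L'Hôpital's rule gives finite limits of `U`, `U'` and `U''` at both
endpoints, so that `U` extends to a `C²` function on `[0, 1]` (`Profile.exists_solution`).
-/

namespace CubicWave

open Real Set Filter Topology

/-! ### Elementary bounds -/

lemma self_le_sinh {x : ℝ} (hx : 0 ≤ x) : x ≤ sinh x := self_le_sinh_iff.2 hx

lemma sinh_pos' {x : ℝ} (hx : 0 < x) : 0 < sinh x := sinh_pos_iff.2 hx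

lemma one_add_sq_le_cosh (x : ℝ) (hx : 0 ≤ x) : 1 + x ^ 2 / 2 ≤ cosh x := by
  have h := self_le_sinh (x := x / 2) (by positivity)
  have h2 : cosh x = 2 * sinh (x / 2) ^ 2 + 1 := by
    have := cosh_two_mul (x / 2)
    have h3 := cosh_sq (x / 2)
    rw [show 2 * (x / 2) = x by ring] at this
    linarith
  rw [h2]
  nlinarith [sq_nonneg (x / 2), sq_nonneg (sinh (x/2) - x / 2)]

lemma cubic_le_sinh {x : ℝ} (hx : 0 ≤ x) : x * (1 + x ^ 2) ≤ 6 * sinh x := by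
  have hm : MonotoneOn (fun y : ℝ => 6 * sinh y - y * (1 + y ^ 2)) (Ici 0) := by
    refine monotoneOn_of_deriv_nonneg (convex_Ici 0) (by fun_prop) (by fun_prop) ?_
    intro y hy
    rw [interior_Ici] at hy
    have hd : HasDerivAt (fun y : ℝ => 6 * sinh y - y * (1 + y ^ 2))
        (6 * cosh y - (1 * (1 + y ^ 2) + y * (2 * y))) y := by
      have := ((hasDerivAt_sinh y).const_mul 6).sub
        ((hasDerivAt_id y).mul (((hasDerivAt_id y).pow 2).const_add 1))
      refine this.congr_deriv ?_
      simp
    rw [hd.deriv]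
    have := one_add_sq_le_cosh y hy.le
    nlinarith
  have := hm (mem_Ici.2 le_rfl) (mem_Ici.2 hx) hx
  simp at this
  linarith

lemma sinh_le_two_mul {x : ℝ} (hx : 0 ≤ x) (hx1 : x ≤ 1) : sinh x ≤ 2 * x := by
  have hm : MonotoneOn (fun y : ℝ => 2 * y - sinh y) (Icc 0 1) := by
    refine monotoneOn_of_deriv_nonneg (convex_Icc 0 1) (by fun_prop) (by fun_prop) ?_
    intro y hy
    rw [interior_Icc] at hy
    have hd : HasDerivAt (fun y : ℝ => 2 * y - sinh y) (2 * 1 - cosh y) y :=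
      ((hasDerivAt_id y).const_mul 2).sub (hasDerivAt_sinh y)
    rw [hd.deriv]
    have h1 : cosh y ≤ cosh 1 := by
      rw [cosh_le_cosh, abs_of_pos hy.1, abs_one]; exact hy.2.le
    have h2 : cosh 1 ≤ 2 := by
      rw [cosh_eq]
      have := exp_one_lt_d9
      have h3 : exp (-1) ≤ 1 := by simp
      linarith
    linarith
  have := hm (⟨le_rfl, zero_le_one⟩ : (0:ℝ) ∈ Icc (0:ℝ) 1) ⟨hx, hx1⟩ hx
  simp at this
  linarith

/-- The growth of `sinh` turns a linear bound on `w` into an integrable bound on the force. -/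
lemma force_bound {s x w : ℝ} (hx : 0 ≤ x) (hw : |w| ≤ s * x) :
    |w ^ 3 / sinh x ^ 2| ≤ s ^ 3 * (36 * x / (1 + x ^ 2) ^ 2) := by
  rcases hx.eq_or_lt with rfl | hx
  · simp
  have hS := sinh_pos' hx
  have hc := cubic_le_sinh hx.le
  rw [abs_div, abs_pow, abs_of_pos (by positivity : 0 < sinh x ^ 2)]
  have h1 : |w| ^ 3 ≤ (s * x) ^ 3 := pow_le_pow_left₀ (abs_nonneg _) hw 3
  have hs : 0 ≤ s := by
    by_contra h
    push Not at h
    nlinarith [abs_nonneg w]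
  have h2 : (x * (1 + x ^ 2)) ^ 2 ≤ (6 * sinh x) ^ 2 := pow_le_pow_left₀ (by positivity) hc 2
  rw [div_le_iff₀ (by positivity)]
  refine h1.trans ?_
  have : s ^ 3 * (36 * x / (1 + x ^ 2) ^ 2) * sinh x ^ 2
      = s ^ 3 * x * (6 * sinh x) ^ 2 / (1 + x ^ 2) ^ 2 := by ring
  rw [this, le_div_iff₀ (by positivity)]
  calc (s * x) ^ 3 * (1 + x ^ 2) ^ 2 = s ^ 3 * x * (x * (1 + x ^ 2)) ^ 2 := by ring
    _ ≤ _ := by gcongr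

/-- Near `0` the force of a linearly bounded `w` vanishes, in spite of the singular coefficient.
-/
lemma force_bound' {s x w : ℝ} (hx : 0 ≤ x) (hw : |w| ≤ s * x) :
    |w ^ 3 / sinh x ^ 2| ≤ s ^ 3 * x := by
  rcases hx.eq_or_lt with rfl | hx
  · simp
  have hS := sinh_pos' hx
  have hc := self_le_sinh hx.le
  rw [abs_div, abs_pow, abs_of_pos (by positivity : 0 < sinh x ^ 2)]
  have h1 : |w| ^ 3 ≤ (s * x) ^ 3 := pow_le_pow_left₀ (abs_nonneg _) hw 3
  have hs : 0 ≤ s := by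
    by_contra h
    push Not at h
    nlinarith [abs_nonneg w]
  have h2 : x ^ 2 ≤ (sinh x) ^ 2 := pow_le_pow_left₀ (by positivity) hc 2
  rw [div_le_iff₀ (by positivity)]
  refine h1.trans ?_
  calc (s * x) ^ 3  = s ^ 3 * x * x ^ 2 := by ring
    _ ≤ _ := by gcongr

lemma force_lipschitz {C x a b : ℝ} (hx : 0 ≤ x) (ha : |a| ≤ C * x) (hb : |b| ≤ C * x) :
    |a ^ 3 / sinh x ^ 2 - b ^ 3 / sinh x ^ 2| ≤ 3 * C ^ 2 * |a - b| := by
  rcases hx.eq_or_lt with rfl | hx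
  · simp; positivity
  have hS := sinh_pos' hx
  have hc := self_le_sinh hx.le
  rw [← sub_div, abs_div, abs_of_pos (by positivity : 0 < sinh x ^ 2), div_le_iff₀ (by positivity)]
  have h2 : x ^ 2 ≤ (sinh x) ^ 2 := pow_le_pow_left₀ (by positivity) hc 2
  rw [show a ^ 3 - b ^ 3 = (a - b) * (a ^ 2 + a * b + b ^ 2) by ring, abs_mul]
  have h3 : |a ^ 2 + a * b + b ^ 2| ≤ 3 * (C * x) ^ 2 := by
    rw [abs_le] at *
    constructor <;> nlinarith
  calc |a - b| * |a ^ 2 + a * b + b ^ 2| ≤ |a - b| * (3 * (C * x) ^ 2) := by gcongr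
    _ = 3 * C ^ 2 * |a - b| * x ^ 2 := by ring
    _ ≤ _ := by gcongr

/-! ### Trajectories: existence and continuous dependence -/

/-- `Traj c w z`: the pair `(w, z)` solves `w' = z`, `z' = -w³ / sinh² x` on `[0, ∞)` with `w 0 =
0` and `z 0 = c`. The derivative at `0` is one-sided, and there the junk value `w 0 ^ 3 / sinh 0 ^
2 = 0` is the correct limit of the force. The bound `|z| ≤ |c|` follows from the energy but is
kept as a field, because it provides the a priori bounds used everywhere. -/
structure Traj (c : ℝ) (w z : ℝ → ℝ) : Prop where
  w0 : w 0 = 0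
  z0 : z 0 = c
  hw : ∀ x, 0 ≤ x → HasDerivWithinAt w (z x) (Ici 0) x
  hz : ∀ x, 0 ≤ x → HasDerivWithinAt z (-(w x ^ 3 / sinh x ^ 2)) (Ici 0) x
  bd : ∀ x, 0 ≤ x → |z x| ≤ |c|

/-- The truncation of `y` to the interval `[-a, a]`, for `0 ≤ a`. -/
noncomputable def clamp (a y : ℝ) : ℝ := max (-a) (min a y)

lemma abs_clamp_le {a : ℝ} (ha : 0 ≤ a) (y : ℝ) : |clamp a y| ≤ a := by
  rw [abs_le]
  exact ⟨le_max_left _ _, max_le (by linarith) (min_le_left _ _)⟩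

lemma clamp_eq {a y : ℝ} (h : |y| ≤ a) : clamp a y = y := by
  rw [abs_le] at h
  rw [clamp, min_eq_right h.2, max_eq_right h.1]

lemma clamp_lipschitz (a : ℝ) : LipschitzWith 1 (clamp a) :=
  (LipschitzWith.id.const_min a).const_max (-a)

lemma abs_clamp_sub_le (a x y : ℝ) : |clamp a x - clamp a y| ≤ |x - y| := by
  simpa [Real.dist_eq] using (clamp_lipschitz a).dist_le_mul x y

lemma continuous_clamp (a : ℝ) : Continuous (clamp a) := (clamp_lipschitz a).continuous

/-- The vector field of the system at time `t`, with the slope truncated at `C` and the position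
at `C * t`. It is globally Lipschitz uniformly in `t ≥ 0`, despite the singularity of `1 / sinh²
t` at `0`, and it agrees with the true field along solutions of initial slope at most `C`. -/
noncomputable def truncField (C t : ℝ) (p : ℝ × ℝ) : ℝ × ℝ :=
  (clamp C p.2, -(clamp (C * t) p.1 ^ 3 / sinh t ^ 2))

lemma truncField_lipschitz {C t : ℝ} (hC : 0 ≤ C) (ht : 0 ≤ t) :
    LipschitzWith (Real.toNNReal (1 + 3 * C ^ 2)) (truncField C t) := by
  refine LipschitzWith.of_dist_le_mul fun p q => ?_
  rw [Real.coe_toNNReal _ (by positivity)]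
  have h1 : |p.1 - q.1| ≤ dist p q := by rw [← Real.dist_eq]; exact le_max_left _ _
  have h2 : |p.2 - q.2| ≤ dist p q := by rw [← Real.dist_eq]; exact le_max_right _ _
  have hd : 0 ≤ dist p q := dist_nonneg
  rw [Prod.dist_eq]
  refine max_le ?_ ?_
  · rw [Real.dist_eq]
    refine (abs_clamp_sub_le _ _ _).trans ?_
    nlinarith [sq_nonneg C]
  · rw [Real.dist_eq]
    have h3 := force_lipschitz ht (abs_clamp_le (by positivity : 0 ≤ C * t) p.1)
      (abs_clamp_le (by positivity : 0 ≤ C * t) q.1)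
    have h4 := abs_clamp_sub_le (C * t) p.1 q.1
    simp only [truncField]
    rw [neg_sub_neg, abs_sub_comm]
    refine h3.trans ?_
    nlinarith [sq_nonneg C]

lemma truncField_continuous {C T : ℝ} (hC : 0 ≤ C) (p : ℝ × ℝ) :
    ContinuousOn (fun t => truncField C t p) (Icc 0 T) := by
  refine continuousOn_const.prodMk (ContinuousOn.neg ?_)
  intro t ht
  rcases ht.1.eq_or_lt with rfl | ht0
  · have hb : ∀ t ∈ Icc 0 T, ‖clamp (C * t) p.1 ^ 3 / sinh t ^ 2‖ ≤ C ^ 3 * t := fun t ht =>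
      force_bound' ht.1 (abs_clamp_le (mul_nonneg hC ht.1) _)
    rw [ContinuousWithinAt]
    simp only [sinh_zero, ne_eq, OfNat.ofNat_ne_zero, not_false_eq_true, zero_pow, div_zero]
    refine squeeze_zero_norm' (a := fun t => C ^ 3 * t) ?_ ?_
    · filter_upwards [self_mem_nhdsWithin] with t ht using hb t ht
    · have : Continuous fun t : ℝ => C ^ 3 * t := by fun_prop
      have := (this.tendsto 0).mono_left (nhdsWithin_le_nhds (s := Icc 0 T))
      simpa using this
  · have h1 : Continuous fun t => clamp (C * t) p.1 := by
      unfold clamp; fun_prop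
    refine ContinuousAt.continuousWithinAt ?_
    exact (h1.continuousAt.pow 3).div (by fun_prop) (pow_ne_zero _ (sinh_pos' ht0).ne')

lemma truncField_norm_le {C t T : ℝ} (hC : 0 ≤ C) (ht : t ∈ Icc 0 T) (p : ℝ × ℝ) :
    ‖truncField C t p‖ ≤ C + C ^ 3 * T := by
  have hT : 0 ≤ T := ht.1.trans ht.2
  rw [Prod.norm_def]
  refine max_le ?_ ?_
  · have : 0 ≤ C ^ 3 * T := by positivity
    exact (abs_clamp_le hC p.2).trans (by linarith)
  · have := force_bound' ht.1 (abs_clamp_le (mul_nonneg hC ht.1) p.1)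
    simp only [truncField, norm_neg, Real.norm_eq_abs]
    have h2 : C ^ 3 * t ≤ C ^ 3 * T := by gcongr; exact ht.2
    linarith

lemma exists_trunc_Icc {C T : ℝ} (hC : 0 ≤ C) (hT : 0 ≤ T) :
    ∃ α : ℝ → ℝ × ℝ, α 0 = (0, C) ∧
      ∀ t ∈ Icc 0 T, HasDerivWithinAt α (truncField C t (α t)) (Icc 0 T) t := by
  have hL : 0 ≤ C + C ^ 3 * T := by positivity
  have : IsPicardLindelof (truncField C) (tmin := 0) (tmax := T) ⟨0, le_rfl, hT⟩ ((0, C) : ℝ × ℝ)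
      (Real.toNNReal ((C + C ^ 3 * T) * T)) 0 (Real.toNNReal (C + C ^ 3 * T))
      (Real.toNNReal (1 + 3 * C ^ 2)) :=
    { lipschitzOnWith := fun t ht => (truncField_lipschitz hC ht.1).lipschitzOnWith
      continuousOn := fun p _ => truncField_continuous hC p
      norm_le := fun t ht p _ => by
        rw [Real.coe_toNNReal _ hL]; exact truncField_norm_le hC ht p
      mul_max_le := by
        rw [Real.coe_toNNReal _ hL, Real.coe_toNNReal _ (by positivity)]
        simp [hT] }
  exact this.exists_eq_forall_mem_Icc_hasDerivWithinAt₀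

/-- Solutions of the truncated system on the intervals `[0, N]` agree by uniqueness, and so glue
to a solution on `[0, ∞)`. -/
lemma exists_trunc {C : ℝ} (hC : 0 ≤ C) :
    ∃ α : ℝ → ℝ × ℝ, α 0 = (0, C) ∧
      ∀ t, 0 ≤ t → HasDerivWithinAt α (truncField C t (α t)) (Ici 0) t := by
  choose α h0 hα using fun N : ℕ => exists_trunc_Icc hC (Nat.cast_nonneg (α := ℝ) N)
  have huniq : ∀ N M : ℕ, N ≤ M → EqOn (α N) (α M) (Icc 0 (N : ℝ)) := by
    intro N M hNM
    have hNM' : (N : ℝ) ≤ M := by exact_mod_cast hNM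
    have key : ∀ K : ℕ, N ≤ K → ContinuousOn (α K) (Icc 0 (N : ℝ)) ∧ ∀ t ∈ Ico 0 (N : ℝ),
        HasDerivWithinAt (α K) (truncField C t (α K t)) (Ici t) t := by
      intro K hK
      have hK' : (N : ℝ) ≤ K := by exact_mod_cast hK
      constructor
      · intro t ht
        exact (hα K t ⟨ht.1, ht.2.trans hK'⟩).continuousWithinAt.mono (Icc_subset_Icc_right hK')
      · intro t ht
        have h1 := hα K t ⟨ht.1, ht.2.le.trans hK'⟩
        have h2 : HasDerivWithinAt (α K) (truncField C t (α K t)) (Icc t (K:ℝ)) t :=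
          h1.mono (Icc_subset_Icc_left ht.1)
        exact h2.mono_of_mem_nhdsWithin (Icc_mem_nhdsGE (ht.2.trans_le hK'))
    exact ODE_solution_unique_of_mem_Icc_right (v := truncField C) (s := fun _ => univ)
      (fun t ht => (truncField_lipschitz hC ht.1).lipschitzOnWith)
      (key N le_rfl).1 (key N le_rfl).2 (fun _ _ => trivial)
      (key M hNM).1 (key M hNM).2 (fun _ _ => trivial) ((h0 N).trans (h0 M).symm)
  refine ⟨fun t => α (⌊t⌋₊ + 2) t, by simp [h0], fun t ht => ?_⟩
  set N := ⌊t⌋₊ + 2 with hN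
  have htN : t < N := by
    have := Nat.lt_floor_add_one t
    rw [hN]; push_cast; linarith
  have heq : ∀ s ∈ Icc 0 (N : ℝ), α (⌊s⌋₊ + 2) s = α N s := by
    intro s hs
    rcases le_total (⌊s⌋₊ + 2) N with h | h
    · refine huniq _ _ h ⟨hs.1, ?_⟩
      have := (Nat.lt_floor_add_one s).le
      push_cast; linarith
    · exact (huniq _ _ h hs).symm
  have hmem : Icc 0 (N : ℝ) ∈ 𝓝[Ici 0] t := by
    rw [← Ici_inter_Iic, inter_comm]
    exact inter_mem_nhdsWithin _ (Iic_mem_nhds htN) |> fun h => by rwa [inter_comm] at h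
  have h1 : HasDerivWithinAt (α N) (truncField C t (α N t)) (Ici 0) t :=
    (hα N t ⟨ht, htN.le⟩).mono_of_mem_nhdsWithin hmem
  refine h1.congr_of_eventuallyEq ?_ rfl
  filter_upwards [hmem] with s hs using heq s hs

lemma abs_le_of_hasDerivWithinAt {f f' : ℝ → ℝ} {C : ℝ}
    (hf : ∀ x, 0 ≤ x → HasDerivWithinAt f (f' x) (Ici 0) x) (hb : ∀ x, 0 ≤ x → |f' x| ≤ C)
    (h0 : f 0 = 0) {x : ℝ} (hx : 0 ≤ x) : |f x| ≤ C * x := by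
  have := (convex_Ici (0:ℝ)).norm_image_sub_le_of_norm_hasDerivWithin_le (f := f) (f' := f')
    (C := C) (fun y hy => hf y hy) (fun y hy => hb y hy) (mem_Ici.2 le_rfl) (mem_Ici.2 hx)
  simpa [h0, abs_of_nonneg hx] using this

lemma continuousOn_pow_four_div {w : ℝ → ℝ} {C : ℝ} (hc : ContinuousOn w (Ici 0))
    (hb : ∀ x, 0 ≤ x → |w x| ≤ C * x) :
    ContinuousOn (fun x => w x ^ 4 / sinh x ^ 2) (Ici 0) := by
  intro t ht
  rcases (mem_Ici.1 ht).eq_or_lt with rfl | ht0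
  · rw [ContinuousWithinAt]
    simp only [sinh_zero, ne_eq, OfNat.ofNat_ne_zero, not_false_eq_true, zero_pow, div_zero]
    refine squeeze_zero_norm' (a := fun t => C ^ 4 * t ^ 2) ?_ ?_
    · filter_upwards [self_mem_nhdsWithin] with t ht
      have h1 := force_bound' (mem_Ici.1 ht) (hb t ht)
      have h2 := hb t ht
      rw [Real.norm_eq_abs, pow_succ, mul_div_right_comm, abs_mul]
      calc _ ≤ (C ^ 3 * t) * (C * t) := mul_le_mul h1 h2 (abs_nonneg _) ((abs_nonneg _).trans h1)
        _ = _ := by ring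
    · have : Continuous fun t : ℝ => C ^ 4 * t ^ 2 := by fun_prop
      have := (this.tendsto 0).mono_left (nhdsWithin_le_nhds (s := Ici 0))
      simpa using this
  · exact ((hc t ht).pow 4).div (by fun_prop) (pow_ne_zero _ (sinh_pos' ht0).ne')

lemma hasDerivAt_potential {w : ℝ → ℝ} {x w' : ℝ} (hx : 0 < x) (hw : HasDerivAt w w' x) :
    HasDerivAt (fun x => w x ^ 4 / sinh x ^ 2)
      (4 * (w x ^ 3 / sinh x ^ 2) * w' - 2 * w x ^ 4 * cosh x / sinh x ^ 3) x := by
  have hS := (sinh_pos' hx).ne'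
  refine ((hw.pow 4).div ((hasDerivAt_sinh x).pow 2) (pow_ne_zero _ hS)).congr_deriv ?_
  simp
  field_simp

/-- The primitive of `clamp C` vanishing at `0`: the kinetic energy of the truncated system. -/
noncomputable def clampInt (C y : ℝ) : ℝ := ∫ t in (0:ℝ)..y, clamp C t

lemma hasDerivAt_clampInt (C y : ℝ) : HasDerivAt (clampInt C) (clamp C y) y :=
  intervalIntegral.integral_hasDerivAt_right ((continuous_clamp C).intervalIntegrable _ _)
    ((continuous_clamp C).stronglyMeasurableAtFilter _ _) (continuous_clamp C).continuousAt

lemma clampInt_neg {C : ℝ} (hC : 0 ≤ C) (y : ℝ) : clampInt C (-y) = clampInt C y := by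
  have hodd : ∀ t, clamp C (-t) = - clamp C t := by
    intro t
    unfold clamp
    rcases le_total C t with h | h <;> rcases le_total (-C) t with h' | h' <;>
    simp only [max_def, min_def] <;> split_ifs <;> linarith
  unfold clampInt
  have := intervalIntegral.integral_comp_neg (clamp C) (a := 0) (b := y)
  rw [neg_zero] at this
  rw [intervalIntegral.integral_symm (-y) 0]
  simp only [hodd, intervalIntegral.integral_neg] at this
  linarith

lemma clampInt_lt {C y : ℝ} (hC : 0 < C) (hy : C < |y|) : clampInt C C < clampInt C y := by
  wlog h : 0 ≤ y generalizing y
  · rw [← clampInt_neg hC.le y]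
    exact this (by rwa [abs_neg]) (by linarith)
  rw [abs_of_nonneg h] at hy
  have hm : StrictMonoOn (clampInt C) (Ici C) := by
    refine strictMonoOn_of_deriv_pos (convex_Ici C)
      (fun x _ => (hasDerivAt_clampInt C x).continuousAt.continuousWithinAt) ?_
    intro x hx
    rw [interior_Ici] at hx
    rw [(hasDerivAt_clampInt C x).deriv, clamp, min_eq_left (le_of_lt hx)]
    exact lt_max_of_lt_right hC
  exact hm (mem_Ici.2 le_rfl) hy.le hy

/-- A solution of the truncated system is a genuine trajectory: the truncation of `w` is inactive
since `|w'| ≤ c`, and the truncation of `z` is inactive since the energy with kinetic part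
`clampInt` decreases from its initial value `clampInt c c`. -/
theorem exists_traj {c : ℝ} (hc : 0 < c) : ∃ w z, Traj c w z := by
  obtain ⟨α, h0, hα⟩ := exists_trunc hc.le
  have hw : ∀ x, 0 ≤ x → HasDerivWithinAt (fun x => (α x).1) (clamp c (α x).2) (Ici 0) x :=
    fun x hx => (hα x hx).fst
  have hwb : ∀ x, 0 ≤ x → |(α x).1| ≤ c * x := fun x hx =>
    abs_le_of_hasDerivWithinAt hw (fun y _ => abs_clamp_le hc.le _) (by simp [h0]) hx
  have hz : ∀ x, 0 ≤ x → HasDerivWithinAt (fun x => (α x).2)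
      (-((α x).1 ^ 3 / sinh x ^ 2)) (Ici 0) x := by
    intro x hx
    have : HasDerivWithinAt (fun x => (α x).2) (truncField c x (α x)).2 (Ici 0) x := (hα x hx).snd
    simpa only [truncField, clamp_eq (hwb x hx)] using this
  have hE : AntitoneOn (fun x => clampInt c (α x).2 + (1 / 4) * ((α x).1 ^ 4 / sinh x ^ 2))
      (Ici 0) := by
    have hcw : ContinuousOn (fun x => (α x).1) (Ici 0) := fun x hx => (hw x hx).continuousWithinAt
    have hcz : ContinuousOn (fun x => (α x).2) (Ici 0) := fun x hx => (hz x hx).continuousWithinAt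
    have hd : ∀ x ∈ interior (Ici (0:ℝ)), HasDerivAt
        (fun x => clampInt c (α x).2 + (1 / 4) * ((α x).1 ^ 4 / sinh x ^ 2))
        (-((1 / 2) * (α x).1 ^ 4 * cosh x / sinh x ^ 3)) x := by
      intro x hx
      rw [interior_Ici] at hx
      have hx0 : 0 < x := hx
      have h1 := (hw x hx0.le).hasDerivAt (Ici_mem_nhds hx0)
      have h2 := (hz x hx0.le).hasDerivAt (Ici_mem_nhds hx0)
      have h3 := (hasDerivAt_clampInt c (α x).2).comp x h2
      have h4 := h3.add ((hasDerivAt_potential hx0 h1).const_mul (1 / 4))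
      refine h4.congr_deriv ?_
      ring
    refine antitoneOn_of_deriv_nonpos (convex_Ici 0) ?_
      (fun x hx => (hd x hx).differentiableAt.differentiableWithinAt) ?_
    · refine ContinuousOn.add ?_ ((continuousOn_pow_four_div hcw hwb).const_smul (1/4 : ℝ))
      have : Continuous (clampInt c) :=
        continuous_iff_continuousAt.2 fun y => (hasDerivAt_clampInt c y).continuousAt
      exact this.comp_continuousOn hcz
    · intro x hx
      rw [(hd x hx).deriv]
      rw [interior_Ici] at hx
      have := sinh_pos' (mem_Ioi.1 hx)
      have := cosh_pos x
      have : 0 ≤ (1 / 2) * (α x).1 ^ 4 * cosh x / sinh x ^ 3 := by positivity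
      linarith
  have hzb : ∀ x, 0 ≤ x → |(α x).2| ≤ c := by
    intro x hx
    by_contra! h
    have h1 := clampInt_lt hc h
    have h2 := hE (mem_Ici.2 le_rfl) (mem_Ici.2 hx) hx
    have h3 : 0 ≤ (1/4) * ((α x).1 ^ 4 / sinh x ^ 2) := by positivity
    simp [h0] at h2
    linarith
  refine ⟨fun x => (α x).1, fun x => (α x).2, by simp [h0], by simp [h0], fun x hx => ?_, hz,
    fun x hx => (hzb x hx).trans (le_abs_self _)⟩
  simpa only [clamp_eq (hzb x hx)] using hw x hx

namespace Traj
variable {c : ℝ} {w z : ℝ → ℝ}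

lemma contw (h : Traj c w z) : ContinuousOn w (Ici 0) := fun x hx => (h.hw x hx).continuousWithinAt
lemma contz (h : Traj c w z) : ContinuousOn z (Ici 0) := fun x hx => (h.hz x hx).continuousWithinAt

lemma derivw (h : Traj c w z) {x : ℝ} (hx : 0 < x) : HasDerivAt w (z x) x :=
  (h.hw x hx.le).hasDerivAt (Ici_mem_nhds hx)

lemma derivz (h : Traj c w z) {x : ℝ} (hx : 0 < x) :
    HasDerivAt z (-(w x ^ 3 / sinh x ^ 2)) x :=
  (h.hz x hx.le).hasDerivAt (Ici_mem_nhds hx)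

lemma abs_w_le (h : Traj c w z) {x : ℝ} (hx : 0 ≤ x) : |w x| ≤ |c| * x :=
  abs_le_of_hasDerivWithinAt h.hw h.bd h.w0 hx

lemma neg (h : Traj c w z) : Traj (-c) (fun x => -w x) (fun x => -z x) where
  w0 := by simp [h.w0]
  z0 := by simp [h.z0]
  hw x hx := (h.hw x hx).neg
  hz x hx := (h.hz x hx).neg.congr_deriv (by ring)
  bd x hx := by simpa using h.bd x hx

/-- The energy `z² / 2 + w⁴ / (4 sinh² x)` is nonincreasing. -/
lemma energy (h : Traj c w z) {x y : ℝ} (hx : 0 ≤ x) (hxy : x ≤ y) :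
    z y ^ 2 / 2 + (1 / 4) * (w y ^ 4 / sinh y ^ 2)
      ≤ z x ^ 2 / 2 + (1 / 4) * (w x ^ 4 / sinh x ^ 2) := by
  have hd : ∀ x ∈ interior (Ici (0:ℝ)), HasDerivAt
      (fun x => z x ^ 2 / 2 + (1 / 4) * (w x ^ 4 / sinh x ^ 2))
      (-((1 / 2) * w x ^ 4 * cosh x / sinh x ^ 3)) x := by
    intro x hx
    rw [interior_Ici] at hx
    have hx0 : 0 < x := hx
    have h4 := (((h.derivz hx0).pow 2).div_const 2).add
      ((hasDerivAt_potential hx0 (h.derivw hx0)).const_mul (1 / 4))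
    refine h4.congr_deriv ?_
    simp
    ring
  have : AntitoneOn (fun x => z x ^ 2 / 2 + (1 / 4) * (w x ^ 4 / sinh x ^ 2)) (Ici 0) := by
    refine antitoneOn_of_deriv_nonpos (convex_Ici 0) ?_
      (fun x hx => (hd x hx).differentiableAt.differentiableWithinAt) ?_
    · exact ((h.contz.pow 2).div_const 2).add
        ((continuousOn_pow_four_div h.contw (fun x hx => h.abs_w_le hx)).const_smul (1/4 : ℝ))
    · intro x hx
      rw [(hd x hx).deriv]
      rw [interior_Ici] at hx
      have := sinh_pos' (mem_Ioi.1 hx)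
      have := cosh_pos x
      have : 0 ≤ (1 / 2) * w x ^ 4 * cosh x / sinh x ^ 3 := by positivity
      linarith
  exact this hx (hx.trans hxy) hxy

/-- The energy at a zero of `w` is purely kinetic, so it bounds the slope from then on. -/
lemma abs_z_le (h : Traj c w z) {x y : ℝ} (hx : 0 ≤ x) (hxy : x ≤ y) (h0 : w x = 0) :
    |z y| ≤ |z x| := by
  have := h.energy hx hxy
  have h3 : 0 ≤ (1/4) * (w y ^ 4 / sinh y ^ 2) := by positivity
  rw [h0] at this
  simp at this
  exact sq_le_sq.1 (by linarith)

lemma abs_w_le' (h : Traj c w z) {x y : ℝ} (hx : 0 ≤ x) (hxy : x ≤ y) (h0 : w x = 0) :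
    |w y| ≤ |z x| * (y - x) := by
  have := (convex_Ici x).norm_image_sub_le_of_norm_hasDerivWithin_le (f := w) (f' := z)
    (C := |z x|) (fun t ht => (h.hw t (hx.trans ht)).mono (Ici_subset_Ici.2 hx))
    (fun t ht => h.abs_z_le hx ht h0) (mem_Ici.2 le_rfl) (mem_Ici.2 hxy)
  simpa [h0, abs_of_nonneg (sub_nonneg.2 hxy)] using this

/-- Continuous dependence on the initial slope, by Grönwall's inequality for the truncated field.
-/
lemma dist_le (h : Traj c w z) {c' : ℝ} {w' z' : ℝ → ℝ} (h' : Traj c' w' z') {C : ℝ}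
    (hc : |c| ≤ C) (hc' : |c'| ≤ C) {x : ℝ} (hx : 0 ≤ x) :
    |w x - w' x| ≤ |c - c'| * exp ((1 + 3 * C ^ 2) * x) ∧
    |z x - z' x| ≤ |c - c'| * exp ((1 + 3 * C ^ 2) * x) := by
  have hC : 0 ≤ C := (abs_nonneg _).trans hc
  have key : ∀ {c : ℝ} {w z : ℝ → ℝ}, Traj c w z → |c| ≤ C →
      ContinuousOn (fun x => (w x, z x)) (Icc 0 x) ∧
      ∀ t ∈ Ico 0 x, HasDerivWithinAt (fun x => (w x, z x))
        (truncField C t (w t, z t)) (Ici t) t := by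
    intro c w z h hc
    refine ⟨(h.contw.prodMk h.contz).mono Icc_subset_Ici_self, fun t ht => ?_⟩
    have h1 : clamp C (z t) = z t := clamp_eq ((h.bd t ht.1).trans hc)
    have h2 : clamp (C * t) (w t) = w t :=
      clamp_eq ((h.abs_w_le ht.1).trans (mul_le_mul_of_nonneg_right hc ht.1))
    simp only [truncField, h1, h2]
    exact ((h.hw t ht.1).prodMk (h.hz t ht.1)).mono (Ici_subset_Ici.2 ht.1)
  have := dist_le_of_trajectories_ODE_of_mem (v := truncField C) (s := fun _ => univ)
    (fun t ht => (truncField_lipschitz hC ht.1).lipschitzOnWith) (key h hc).1 (key h hc).2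
    (fun _ _ => trivial) (key h' hc').1 (key h' hc').2 (fun _ _ => trivial) (δ := |c - c'|)
    (by simp [h.w0, h'.w0, h.z0, h'.z0, Prod.dist_eq, Real.dist_eq]) x ⟨hx, le_rfl⟩
  rw [Real.coe_toNNReal _ (by positivity), sub_zero, Prod.dist_eq, Real.dist_eq, Real.dist_eq,
    max_le_iff] at this
  exact this

end Traj

/-! ### Comparison on intervals and decay of the slope -/

lemma antitone_Icc {f f' : ℝ → ℝ} {a b : ℝ} (hc : ContinuousOn f (Icc a b))
    (hd : ∀ x, a < x → x < b → HasDerivAt f (f' x) x) (hn : ∀ x, a < x → x < b → f' x ≤ 0) :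
    AntitoneOn f (Icc a b) := by
  refine antitoneOn_of_hasDerivWithinAt_nonpos (f' := f') (convex_Icc a b) hc ?_ ?_ <;>
  · intro x hx
    rw [interior_Icc] at hx
    first
    | exact (hd x hx.1 hx.2).hasDerivWithinAt
    | exact hn x hx.1 hx.2

lemma monotone_Icc {f f' : ℝ → ℝ} {a b : ℝ} (hc : ContinuousOn f (Icc a b))
    (hd : ∀ x, a < x → x < b → HasDerivAt f (f' x) x) (hn : ∀ x, a < x → x < b → 0 ≤ f' x) :
    MonotoneOn f (Icc a b) := by
  refine monotoneOn_of_hasDerivWithinAt_nonneg (f' := f') (convex_Icc a b) hc ?_ ?_ <;>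
  · intro x hx
    rw [interior_Icc] at hx
    first
    | exact (hd x hx.1 hx.2).hasDerivWithinAt
    | exact hn x hx.1 hx.2

lemma strictMono_Icc {f f' : ℝ → ℝ} {a b : ℝ} (hc : ContinuousOn f (Icc a b))
    (hd : ∀ x, a < x → x < b → HasDerivAt f (f' x) x) (hn : ∀ x, a < x → x < b → 0 < f' x) :
    StrictMonoOn f (Icc a b) := by
  refine strictMonoOn_of_hasDerivWithinAt_pos (f' := f') (convex_Icc a b) hc ?_ ?_ <;>
  · intro x hx
    rw [interior_Icc] at hx
    first
    | exact (hd x hx.1 hx.2).hasDerivWithinAt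
    | exact hn x hx.1 hx.2

/-- The tail weight: an antiderivative of `-36 x / (1 + x²)²`, which up to the factor `-s³` is the
bound in `force_bound`, chosen to vanish at infinity. -/
noncomputable def Q (x : ℝ) : ℝ := 18 / (1 + x ^ 2)

lemma Q_pos (x : ℝ) : 0 < Q x := by unfold Q; positivity

lemma hasDerivAt_Q (x : ℝ) : HasDerivAt Q (-(36 * x / (1 + x ^ 2) ^ 2)) x := by
  have h : (1 + x ^ 2 : ℝ) ≠ 0 := by positivity
  refine ((hasDerivAt_const x (18:ℝ)).div (((hasDerivAt_id x).pow 2).const_add 1) h).congr_deriv ?_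
  simp
  ring

lemma continuous_Q : Continuous Q :=
  continuous_iff_continuousAt.2 fun x => (hasDerivAt_Q x).continuousAt

lemma Q_le {x y : ℝ} (hx : 0 ≤ x) (hxy : x ≤ y) : Q y ≤ Q x := by
  unfold Q
  gcongr

lemma tendsto_Q : Tendsto Q atTop (𝓝 0) := by
  unfold Q
  refine tendsto_const_nhds.div_atTop ?_
  exact tendsto_atTop_add_const_left _ _ (tendsto_pow_atTop two_ne_zero)

namespace Traj
variable {c : ℝ} {w z : ℝ → ℝ}

/-- If `w` grows at most linearly with slope `s` beyond `a`, then the variation of its slope is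
controlled by the tail weight `Q`. -/
lemma tail (h : Traj c w z) {a s x y : ℝ} (ha : 0 ≤ a)
    (hw : ∀ t, a ≤ t → |w t| ≤ s * t) (hy : a ≤ y) (hxy : y ≤ x) :
    |z x - z y| ≤ s ^ 3 * (Q y - Q x) := by
  have hcz : ContinuousOn z (Icc y x) := h.contz.mono fun t ht => ha.trans (hy.trans ht.1)
  have hb : ∀ t, y < t → t < x → |w t ^ 3 / sinh t ^ 2| ≤ s ^ 3 * (36 * t / (1 + t ^ 2) ^ 2) :=
    fun t ht _ => force_bound (ha.trans (hy.trans ht.le)) (hw t (hy.trans ht.le))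
  have h1 : AntitoneOn (fun t => z t + s ^ 3 * Q t) (Icc y x) := by
    refine antitone_Icc (hcz.add (continuous_const.mul continuous_Q).continuousOn)
      (fun t ht _ => (h.derivz (ha.trans_lt (hy.trans_lt ht))).add
        ((hasDerivAt_Q t).const_mul (s ^ 3))) fun t ht ht' => ?_
    have := abs_le.1 (hb t ht ht')
    linarith [this.1]
  have h2 : MonotoneOn (fun t => z t - s ^ 3 * Q t) (Icc y x) := by
    refine monotone_Icc (hcz.sub (continuous_const.mul continuous_Q).continuousOn)
      (fun t ht _ => (h.derivz (ha.trans_lt (hy.trans_lt ht))).sub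
        ((hasDerivAt_Q t).const_mul (s ^ 3))) fun t ht ht' => ?_
    have := abs_le.1 (hb t ht ht')
    linarith [this.2]
  have h3 := h1 ⟨le_rfl, hxy⟩ ⟨hxy, le_rfl⟩ hxy
  have h4 := h2 ⟨le_rfl, hxy⟩ ⟨hxy, le_rfl⟩ hxy
  simp only at h3 h4
  rw [abs_le]
  constructor <;> linarith

/-- After a zero with small slope (relative to the tail weight) the solution is almost linear and
never vanishes again. -/
lemma ne_zero_of_small (h : Traj c w z) {a x : ℝ} (ha : 0 ≤ a) (h0 : w a = 0) (hz : z a ≠ 0)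
    (hs : z a ^ 2 * Q a < 1) (hx : a < x) : w x ≠ 0 := by
  have hwb : ∀ t, a ≤ t → |w t| ≤ |z a| * t := fun t ht =>
    (h.abs_w_le' ha ht h0).trans (mul_le_mul_of_nonneg_left (by linarith) (abs_nonneg _))
  have hza : 0 < |z a| := abs_pos.2 hz
  have hpos : ∀ t, a ≤ t → 0 < z t * z a := by
    intro t ht
    have h1 := h.tail ha hwb le_rfl ht
    have h2 : |z a| ^ 3 * (Q a - Q t) < |z a| := by
      have h3 : |z a| ^ 3 * (Q a - Q t) ≤ |z a| * (z a ^ 2 * Q a) := by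
        rw [← sq_abs (z a)]
        have := mul_pos (pow_pos hza 3) (Q_pos t)
        nlinarith
      nlinarith
    have h3 : |(z t - z a) * z a| < z a ^ 2 := by
      rw [abs_mul, ← sq_abs (z a)]
      nlinarith
    have := (abs_lt.1 h3).1
    nlinarith
  have hm : StrictMonoOn (fun t => w t * z a) (Icc a x) :=
    strictMono_Icc ((h.contw.mono fun t ht => ha.trans ht.1).mul continuousOn_const)
      (fun t ht _ => (h.derivw (ha.trans_lt ht)).mul_const _) fun t ht _ => hpos t ht.le
  have := hm ⟨le_rfl, hx.le⟩ ⟨hx.le, le_rfl⟩ hx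
  intro h1
  simp [h0, h1] at this

end Traj

/-! ### The Prüfer angle -/

/-- The derivative of the Prüfer angle, `(z² + w⁴ / sinh²) / (z² + w²)`. -/
noncomputable def angSpeed (w z : ℝ → ℝ) (t : ℝ) : ℝ :=
  (z t ^ 2 + w t ^ 4 / sinh t ^ 2) / (z t ^ 2 + w t ^ 2)

/-- The Prüfer angle `θ`, normalised by `θ 0 = 0` and characterised by `w = r sin θ`, `z = r cos
θ`. It is defined as the integral of its speed, which avoids choosing a branch of the argument. -/
noncomputable def angle (w z : ℝ → ℝ) (x : ℝ) : ℝ := ∫ t in (0:ℝ)..x, angSpeed w z t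

namespace Traj
variable {c : ℝ} {w z : ℝ → ℝ}

lemma sq_div_le (h : Traj c w z) {x : ℝ} (hx : 0 ≤ x) : w x ^ 2 / sinh x ^ 2 ≤ c ^ 2 := by
  have h1 : |w x| ≤ |c| * sinh x :=
    (h.abs_w_le hx).trans (mul_le_mul_of_nonneg_left (self_le_sinh hx) (abs_nonneg _))
  have h2 : w x ^ 2 ≤ c ^ 2 * sinh x ^ 2 := by
    rw [← mul_pow, sq_le_sq, abs_mul, abs_of_nonneg ((hx.trans (self_le_sinh hx)))]
    exact h1
  exact div_le_of_le_mul₀ (by positivity) (by positivity) h2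

/-- The left-hand side is the absolute value of the derivative of `r² = z² + w²`. -/
lemma growth (h : Traj c w z) {x : ℝ} (hx : 0 ≤ x) :
    |2 * (w x * z x * (1 - w x ^ 2 / sinh x ^ 2))| ≤ (1 + c ^ 2) * (z x ^ 2 + w x ^ 2) := by
  have h1 := h.sq_div_le hx
  have h2 : 0 ≤ w x ^ 2 / sinh x ^ 2 := by positivity
  have h3 : |1 - w x ^ 2 / sinh x ^ 2| ≤ 1 + c ^ 2 := by
    rw [abs_le]; constructor <;> nlinarith [sq_nonneg c]
  have h4 : |2 * (w x * z x)| ≤ z x ^ 2 + w x ^ 2 := by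
    rw [abs_le]
    constructor <;> nlinarith [sq_nonneg (w x + z x), sq_nonneg (w x - z x)]
  rw [← mul_assoc, abs_mul, mul_comm]
  exact mul_le_mul h3 h4 (abs_nonneg _) (by positivity)

/-- `r² = z² + w²` decreases at most exponentially, so it never vanishes for `c ≠ 0`. Hence zeros
of `w` are simple. -/
lemma radius_pos (h : Traj c w z) (hc : c ≠ 0) {x : ℝ} (hx : 0 ≤ x) : 0 < z x ^ 2 + w x ^ 2 := by
  have hexp : ∀ t, HasDerivAt (fun t => exp ((1 + c ^ 2) * t))
      (exp ((1 + c ^ 2) * t) * (1 + c ^ 2)) t := by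
    intro t
    refine (((hasDerivAt_id t).const_mul (1 + c ^ 2)).exp).congr_deriv (by simp)
  have hm : MonotoneOn (fun t => (z t ^ 2 + w t ^ 2) * exp ((1 + c ^ 2) * t)) (Icc 0 x) := by
    refine monotone_Icc (f' := fun t => (2 * (w t * z t * (1 - w t ^ 2 / sinh t ^ 2)) +
      (1 + c ^ 2) * (z t ^ 2 + w t ^ 2)) * exp ((1 + c ^ 2) * t)) ?_ ?_ ?_
    · have := h.contw.mono (Icc_subset_Ici_self : Icc 0 x ⊆ Ici 0)
      have := h.contz.mono (Icc_subset_Ici_self : Icc 0 x ⊆ Ici 0)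
      fun_prop
    · intro t ht _
      refine ((((h.derivz ht).pow 2).add ((h.derivw ht).pow 2)).mul (hexp t)).congr_deriv ?_
      simp
      ring
    · intro t ht _
      have := (abs_le.1 (h.growth ht.le)).1
      exact mul_nonneg (by linarith) (exp_pos _).le
  have := hm ⟨le_rfl, hx⟩ ⟨hx, le_rfl⟩ hx
  simp only [h.w0, h.z0, mul_zero, exp_zero] at this
  have hc2 : 0 < c ^ 2 := by positivity
  exact pos_of_mul_pos_left (lt_of_lt_of_le (by linarith) this) (exp_pos _).le

lemma continuousOn_angSpeed (h : Traj c w z) (hc : c ≠ 0) :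
    ContinuousOn (angSpeed w z) (Ici 0) := by
  refine ContinuousOn.div ((h.contz.pow 2).add
    (continuousOn_pow_four_div h.contw fun x hx => h.abs_w_le hx))
    ((h.contz.pow 2).add (h.contw.pow 2)) fun x hx => (h.radius_pos hc hx).ne'

lemma angSpeed_pos (h : Traj c w z) (hc : c ≠ 0) {x : ℝ} (hx : 0 < x) : 0 < angSpeed w z x := by
  have h1 := h.radius_pos hc hx.le
  have hS := sinh_pos' hx
  refine div_pos ?_ h1
  by_cases hw : w x = 0
  · simpa [hw] using h1
  · positivity

lemma angSpeed_le (h : Traj c w z) {x : ℝ} (hx : 0 ≤ x) : |angSpeed w z x| ≤ 1 + c ^ 2 := by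
  have h0 : 0 ≤ angSpeed w z x := by unfold angSpeed; positivity
  rw [abs_of_nonneg h0]
  refine div_le_of_le_mul₀ (by positivity) (by positivity) ?_
  have h1 := mul_le_mul_of_nonneg_right (h.sq_div_le hx) (sq_nonneg (w x))
  have h2 : w x ^ 4 / sinh x ^ 2 = w x ^ 2 / sinh x ^ 2 * w x ^ 2 := by ring
  nlinarith [mul_nonneg (sq_nonneg c) (sq_nonneg (z x)), sq_nonneg (w x)]

lemma intervalIntegrable (h : Traj c w z) (hc : c ≠ 0) {x : ℝ} (hx : 0 ≤ x) :
    IntervalIntegrable (angSpeed w z) MeasureTheory.volume 0 x := by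
  refine ((h.continuousOn_angSpeed hc).mono ?_).intervalIntegrable
  rw [uIcc_of_le hx]
  exact Icc_subset_Ici_self

lemma angle_zero : angle w z 0 = 0 := by simp [angle]

lemma derivAngle (h : Traj c w z) (hc : c ≠ 0) {x : ℝ} (hx : 0 < x) :
    HasDerivAt (angle w z) (angSpeed w z x) x := by
  have hco : ContinuousOn (angSpeed w z) (Ioi 0) :=
    (h.continuousOn_angSpeed hc).mono Ioi_subset_Ici_self
  exact intervalIntegral.integral_hasDerivAt_right (h.intervalIntegrable hc hx.le)
    (hco.stronglyMeasurableAtFilter isOpen_Ioi x hx) (hco.continuousAt (Ioi_mem_nhds hx))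

lemma contAngle (h : Traj c w z) (hc : c ≠ 0) {x : ℝ} (hx : 0 ≤ x) :
    ContinuousOn (angle w z) (Icc 0 x) := by
  have hi : MeasureTheory.IntegrableOn (angSpeed w z) (uIcc 0 x) MeasureTheory.volume := by
    rw [uIcc_of_le hx]
    exact ((h.continuousOn_angSpeed hc).mono Icc_subset_Ici_self).integrableOn_Icc
  have := intervalIntegral.continuousOn_primitive_interval hi
  rwa [uIcc_of_le hx] at this

lemma angle_lt (h : Traj c w z) (hc : c ≠ 0) {x y : ℝ} (hx : 0 ≤ x) (hxy : x < y) :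
    angle w z x < angle w z y :=
  strictMono_Icc (h.contAngle hc (hx.trans hxy.le)) (fun _ ht _ => h.derivAngle hc ht)
    (fun _ ht _ => h.angSpeed_pos hc ht) ⟨hx, hxy.le⟩ ⟨hx.trans hxy.le, le_rfl⟩ hxy

lemma angle_le (h : Traj c w z) (hc : c ≠ 0) {x y : ℝ} (hx : 0 ≤ x) (hxy : x ≤ y) :
    angle w z x ≤ angle w z y := by
  rcases hxy.eq_or_lt with rfl | hlt
  · rfl
  · exact (h.angle_lt hc hx hlt).le

/-- `(w, z)` is parallel to `(sin θ, cos θ)`. The square of `w cos θ - z sin θ` vanishes at `0`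
and grows at most exponentially, so it is identically zero. -/
lemma pruefer (h : Traj c w z) (hc : c ≠ 0) {x : ℝ} (hx : 0 ≤ x) :
    w x * cos (angle w z x) = z x * sin (angle w z x) := by
  set θ := angle w z with hθ
  have hexp : ∀ t, HasDerivAt (fun t => exp (-(1 + c ^ 2) * t))
      (exp (-(1 + c ^ 2) * t) * -(1 + c ^ 2)) t := by
    intro t
    refine (((hasDerivAt_id t).const_mul (-(1 + c ^ 2))).exp).congr_deriv (by simp)
  have hm : AntitoneOn (fun t => (w t * cos (θ t) - z t * sin (θ t)) ^ 2 *
      exp (-(1 + c ^ 2) * t)) (Icc 0 x) := by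
    refine antitone_Icc (f' := fun t => (w t * cos (θ t) - z t * sin (θ t)) ^ 2 *
      (2 * (w t * z t * (1 - w t ^ 2 / sinh t ^ 2)) / (z t ^ 2 + w t ^ 2) - (1 + c ^ 2)) *
      exp (-(1 + c ^ 2) * t)) ?_ ?_ ?_
    · have := h.contw.mono (Icc_subset_Ici_self : Icc 0 x ⊆ Ici 0)
      have := h.contz.mono (Icc_subset_Ici_self : Icc 0 x ⊆ Ici 0)
      have := h.contAngle hc hx
      rw [← hθ] at this
      fun_prop
    · intro t ht _
      have hθt := h.derivAngle hc ht
      rw [← hθ] at hθt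
      have hr := (h.radius_pos hc ht.le).ne'
      have hS := (sinh_pos' ht).ne'
      refine (((((h.derivw ht).mul hθt.cos).sub ((h.derivz ht).mul hθt.sin)).pow 2).mul
        (hexp t)).congr_deriv ?_
      simp [angSpeed]
      field_simp
      ring
    · intro t ht _
      have hr := h.radius_pos hc ht.le
      have h1 := (abs_le.1 (h.growth ht.le)).2
      have h2 := div_le_of_le_mul₀ hr.le (by positivity) h1
      refine mul_nonpos_of_nonpos_of_nonneg (mul_nonpos_of_nonneg_of_nonpos (sq_nonneg _) ?_)
        (exp_pos _).le
      linarith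
  have := hm ⟨le_rfl, hx⟩ ⟨hx, le_rfl⟩ hx
  have h0 : θ 0 = 0 := angle_zero
  simp only [h.w0, h0, sin_zero, mul_zero, zero_mul, sub_zero, ne_eq, OfNat.ofNat_ne_zero,
    not_false_eq_true, zero_pow] at this
  have h3 := nonpos_of_mul_nonpos_left this (exp_pos _)
  have h4 := pow_eq_zero_iff (two_ne_zero) |>.1 (le_antisymm h3 (sq_nonneg _))
  linarith

/-- Zeros of `w` are the points where the strictly increasing angle is a multiple of `π`. -/
lemma zero_iff (h : Traj c w z) (hc : c ≠ 0) {x : ℝ} (hx : 0 ≤ x) :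
    w x = 0 ↔ sin (angle w z x) = 0 := by
  have h1 := h.pruefer hc hx
  constructor
  · intro h0
    have h2 := h.radius_pos hc hx
    rw [h0, zero_mul] at h1
    rcases mul_eq_zero.1 h1.symm with h3 | h3
    · simp [h0, h3] at h2
    · exact h3
  · intro h0
    rw [h0, mul_zero] at h1
    rcases mul_eq_zero.1 h1 with h3 | h3
    · exact h3
    · have := sin_sq_add_cos_sq (angle w z x)
      simp [h0, h3] at this

end Traj

/-- A choice, for each initial slope `c > 0`, of a trajectory with that slope. -/
def Family (W Z : ℝ → ℝ → ℝ) : Prop := ∀ c, 0 < c → Traj c (W c) (Z c)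

lemma exists_family : ∃ W Z, Family W Z := by
  have : ∀ c, ∃ p : (ℝ → ℝ) × (ℝ → ℝ), 0 < c → Traj c p.1 p.2 := by
    intro c
    by_cases hc : 0 < c
    · obtain ⟨w, z, h⟩ := exists_traj hc
      exact ⟨(w, z), fun _ => h⟩
    · exact ⟨(0, 0), fun h => absurd h hc⟩
  choose p hp using this
  exact ⟨fun c => (p c).1, fun c => (p c).2, hp⟩

namespace Family
variable {W Z : ℝ → ℝ → ℝ}

lemma continuousAt_wz (h : Family W Z) {c x : ℝ} (hc : 0 < c) (hx : 0 ≤ x) :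
    ContinuousAt (fun c => W c x) c ∧ ContinuousAt (fun c => Z c x) c := by
  have hlim : Tendsto (fun c' => |c' - c| * exp ((1 + 3 * (c + 1) ^ 2) * x)) (𝓝 c) (𝓝 0) := by
    have : Continuous fun c' => |c' - c| * exp ((1 + 3 * (c + 1) ^ 2) * x) := by fun_prop
    simpa using this.tendsto c
  have hev : ∀ᶠ c' in 𝓝 c, c' ∈ Ioo 0 (c + 1) := Ioo_mem_nhds hc (by linarith)
  have hd : ∀ c' ∈ Ioo 0 (c + 1), _ := fun c' hc' =>
    (h c' hc'.1).dist_le (h c hc) (C := c + 1) (by rw [abs_of_pos hc'.1]; exact hc'.2.le)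
      (by rw [abs_of_pos hc]; linarith) hx
  constructor
  · refine tendsto_iff_norm_sub_tendsto_zero.2 (squeeze_zero' (by simp) ?_ hlim)
    filter_upwards [hev] with c' hc' using (hd c' hc').1
  · refine tendsto_iff_norm_sub_tendsto_zero.2 (squeeze_zero' (by simp) ?_ hlim)
    filter_upwards [hev] with c' hc' using (hd c' hc').2

lemma continuousAt_angle (h : Family W Z) {c x : ℝ} (hc : 0 < c) (hx : 0 ≤ x) :
    ContinuousAt (fun c => angle (W c) (Z c) x) c := by
  have hev : ∀ᶠ c' in 𝓝 c, c' ∈ Ioo 0 (c + 1) := Ioo_mem_nhds hc (by linarith)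
  unfold angle
  refine intervalIntegral.continuousAt_of_dominated_interval (bound := fun _ => 1 + (c + 1) ^ 2)
    ?_ ?_ (by simp) ?_
  · filter_upwards [hev] with c' hc'
    exact ((h c' hc'.1).intervalIntegrable hc'.1.ne' hx).def'.aestronglyMeasurable
  · filter_upwards [hev] with c' hc'
    refine Eventually.of_forall fun t ht => ?_
    rw [uIoc_of_le hx] at ht
    refine ((h c' hc'.1).angSpeed_le ht.1.le).trans ?_
    nlinarith [hc'.1, hc'.2]
  · refine Eventually.of_forall fun t ht => ?_
    rw [uIoc_of_le hx] at ht
    obtain ⟨h1, h2⟩ := h.continuousAt_wz hc ht.1.le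
    exact ((h2.pow 2).add ((h1.pow 4).div_const _)).div ((h2.pow 2).add (h1.pow 2))
      ((h c hc).radius_pos hc.ne' ht.1.le).ne'

end Family

/-! ### Many zeros for large initial slope -/

lemma inv_sinh_sq_ge {x : ℝ} (h0 : 0 < x) (h1 : x ≤ 1) : 1 / (4 * x ^ 2) ≤ 1 / sinh x ^ 2 := by
  have hs := sinh_pos' h0
  have := sinh_le_two_mul h0.le h1
  refine one_div_le_one_div_of_le (by positivity) ?_
  calc sinh x ^ 2 ≤ (2 * x) ^ 2 := by gcongr
    _ = _ := by ring

namespace Traj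
variable {c : ℝ} {w z : ℝ → ℝ}

/-- While `w ≥ μ` the slope drops at least at the rate `μ³ / (4 t²)`, since `sinh t ≤ 2 t` on `[0,
1]`. -/
lemma drop (h : Traj c w z) {a b μ : ℝ} (ha : 0 < a) (hab : a ≤ b) (hb : b ≤ 1) (hμ : 0 ≤ μ)
    (hw : ∀ t, a ≤ t → t ≤ b → μ ≤ w t) : z b ≤ z a - μ ^ 3 / 4 * (1 / a - 1 / b) := by
  have hm : AntitoneOn (fun t => z t - μ ^ 3 / 4 * t⁻¹) (Icc a b) := by
    refine antitone_Icc (f' := fun t => -(w t ^ 3 / sinh t ^ 2) + μ ^ 3 * (1 / (4 * t ^ 2)))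
      ?_ ?_ ?_
    · refine (h.contz.mono fun t ht => ha.le.trans ht.1).sub
        (continuousOn_const.mul (continuousOn_id.inv₀ fun t ht => (ha.trans_le ht.1).ne'))
    · intro t ht _
      refine ((h.derivz (ha.trans ht)).sub
        ((hasDerivAt_inv (ha.trans ht).ne').const_mul (μ ^ 3 / 4))).congr_deriv ?_
      field_simp
      ring
    · intro t ht htb
      have h1 := inv_sinh_sq_ge (ha.trans ht) (htb.le.trans hb)
      have h2 : μ ^ 3 ≤ w t ^ 3 := pow_le_pow_left₀ hμ (hw t ht.le htb.le) 3
      have h3 : μ ^ 3 * (1 / (4 * t ^ 2)) ≤ w t ^ 3 * (1 / sinh t ^ 2) :=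
        mul_le_mul h2 h1 (by positivity) ((pow_nonneg hμ 3).trans h2)
      rw [mul_one_div (w t ^ 3)] at h3
      linarith
  have := hm ⟨le_rfl, hab⟩ ⟨hab, le_rfl⟩ hab
  simp only [← one_div] at this
  linarith

/-- The factor that bounds from above how far `w` can stay positive once it is at least `1 / 2`.
-/
noncomputable def ratio : ℝ := 516 * exp 16

/-- If `w ≥ 1 / 2` with positive slope at `y`, then `w` cannot stay positive on `[y, ratio * y]`
inside `[0, 1]`. Were `z` nonnegative up to `b = 2 e¹⁶ y`, then `drop` would give `z ≥ w³ / (8 t)`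
on `[y, b / 2]`, so that `w⁻² + (log t) / 4` would decrease there, which `log (b / 2) - log y =
16` makes impossible. Hence `w` has a maximum at some `m ≤ b`. By time `2 m` the slope is at most
`-w(m) / (256 m)`, and it stays so by concavity, which forces a zero by time `258 m`. -/
lemma not_pos (h : Traj c w z) {y : ℝ} (hy : 0 < y) (hy1 : ratio * y ≤ 1) (hwy : 1 / 2 ≤ w y)
    (hzy : 0 < z y) (hpos : ∀ t, y ≤ t → t ≤ ratio * y → 0 < w t) : False := by
  have he : 1 < exp 16 := by simp
  set b := 2 * y * exp 16 with hb
  have hΛ : ratio * y = 258 * b := by rw [hb, ratio]; ring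
  rw [hΛ] at hy1 hpos
  have hby : 2 * y < b := by rw [hb]; nlinarith
  have hcw : ∀ {a e : ℝ}, y ≤ a → ContinuousOn w (Icc a e) := fun ha =>
    h.contw.mono fun t ht => hy.le.trans (ha.trans ht.1)
  have hcz : ∀ {a e : ℝ}, y ≤ a → ContinuousOn z (Icc a e) := fun ha =>
    h.contz.mono fun t ht => hy.le.trans (ha.trans ht.1)
  have hz : AntitoneOn z (Icc y (258 * b)) := by
    refine antitone_Icc (hcz le_rfl) (fun t ht _ => h.derivz (hy.trans ht)) fun t ht ht' => ?_
    have := hpos t ht.le ht'.le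
    have := sinh_pos' (hy.trans ht)
    simp only [Left.neg_nonpos_iff]
    positivity
  have hzb : z b < 0 := by
    by_contra! hzb
    have hz0 : ∀ t, y ≤ t → t ≤ b → 0 ≤ z t := fun t ht htb =>
      hzb.trans (hz ⟨ht, by linarith⟩ ⟨by linarith, by linarith⟩ htb)
    have hw : MonotoneOn w (Icc y b) :=
      monotone_Icc (hcw le_rfl) (fun t ht _ => h.derivw (hy.trans ht))
        fun t ht ht' => hz0 t ht.le ht'.le
    have hm : AntitoneOn (fun t => (w t ^ 2)⁻¹ + 1 / 4 * log t) (Icc y (b / 2)) := by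
      refine antitone_Icc (f' := fun t => -(2 * z t / w t ^ 3) + 1 / (4 * t)) ?_ ?_ ?_
      · refine (((hcw le_rfl).pow 2).inv₀ fun t ht => ?_).add (continuousOn_const.mul
          (continuousOn_id.log fun t ht => (hy.trans_le ht.1).ne'))
        exact pow_ne_zero _ (hpos t ht.1 (by linarith [ht.2])).ne'
      · intro t ht ht'
        have hwt := (hpos t ht.le (by linarith)).ne'
        refine ((((h.derivw (hy.trans ht)).pow 2).inv (pow_ne_zero 2 hwt)).add
          ((hasDerivAt_log (hy.trans ht).ne').const_mul (1 / 4))).congr_deriv ?_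
        have := (hy.trans ht).ne'
        simp
        field_simp
      · intro t ht ht'
        have h0t := hy.trans ht
        have hwt := hpos t ht.le (by linarith)
        have h1 := h.drop h0t (by linarith : t ≤ b) (by linarith) hwt.le
          fun u hu hu' => hw ⟨ht.le, by linarith⟩ ⟨by linarith, hu'⟩ hu
        have h2 : 1 / b ≤ 1 / (2 * t) := one_div_le_one_div_of_le (by linarith) (by linarith)
        have h3 : 1 / t - 1 / (2 * t) = 1 / (2 * t) := by field_simp; norm_num
        have h4 : w t ^ 3 / 4 * (1 / (2 * t)) ≤ z t := by
          have := mul_le_mul_of_nonneg_left (by linarith : 1 / (2 * t) ≤ 1 / t - 1 / b)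
            (by positivity : 0 ≤ w t ^ 3 / 4)
          linarith
        have h5 : 1 / (4 * t) ≤ 2 * z t / w t ^ 3 := by
          rw [le_div_iff₀ (by positivity)]
          calc 1 / (4 * t) * w t ^ 3 = 2 * (w t ^ 3 / 4 * (1 / (2 * t))) := by field_simp
            _ ≤ _ := by linarith
        linarith
    have h1 := hm ⟨le_rfl, by linarith⟩ ⟨by linarith, le_rfl⟩ (by linarith : y ≤ b / 2)
    have h2 : log (b / 2) = log y + 16 := by
      rw [hb, show 2 * y * exp 16 / 2 = y * exp 16 by ring, log_mul hy.ne' (exp_pos _).ne', log_exp]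
    have h3 : (w y ^ 2)⁻¹ ≤ 4 := by
      refine inv_le_of_inv_le₀ (by norm_num) ?_
      nlinarith
    have h4 : 0 < (w (b / 2) ^ 2)⁻¹ := by
      have := hpos (b / 2) (by linarith) (by linarith)
      positivity
    simp only [h2] at h1
    linarith
  -- `m` is the point where `w` attains its maximum.
  obtain ⟨m, hm, hzm⟩ := intermediate_value_Icc' (by linarith : y ≤ b) (hcz le_rfl)
    (⟨hzb.le, hzy.le⟩ : (0:ℝ) ∈ Icc (z b) (z y))
  have hm0 : 0 < m := hy.trans_le hm.1
  have hzn : ∀ t, m ≤ t → t ≤ 258 * b → z t ≤ 0 := fun t ht htb => by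
    rw [← hzm]
    exact hz ⟨hm.1, by linarith⟩ ⟨by linarith [hm.1], htb⟩ ht
  have hM : 1 / 2 ≤ w m := by
    have hw : MonotoneOn w (Icc y m) :=
      monotone_Icc (hcw le_rfl) (fun t ht _ => h.derivw (hy.trans ht)) fun t ht ht' => by
        rw [← hzm]
        exact hz ⟨ht.le, by linarith [hm.2]⟩ ⟨hm.1, by linarith [hm.2]⟩ ht'.le
    exact hwy.trans (hw ⟨le_rfl, hm.1⟩ ⟨hm.1, le_rfl⟩ hm.1)
  have hm2 := hm.1
  have hm3 := hm.2
  have hwd : AntitoneOn w (Icc m (258 * m)) :=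
    antitone_Icc (hcw hm2) (fun t ht _ => h.derivw (hm0.trans ht))
      fun t ht ht' => hzn t ht.le (by linarith)
  -- Either `w` stays above half its maximum on `[m, 2 m]`, and `drop` applies, or it falls by half
  -- its maximum there, and concavity bounds the final slope by the mean slope.
  have hz2 : z (2 * m) ≤ -(w m / (256 * m)) := by
    rcases le_or_gt (w m / 2) (w (2 * m)) with h1 | h1
    · have h2 := h.drop hm0 (by linarith : m ≤ 2 * m) (by linarith) (by linarith : 0 ≤ w m / 2)
        fun t ht ht' => h1.trans (hwd ⟨ht, by linarith⟩ ⟨by linarith, by linarith⟩ ht')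
      rw [hzm] at h2
      refine h2.trans ?_
      have h3 : 1 / m - 1 / (2 * m) = 1 / (2 * m) := by field_simp; norm_num
      have h4 : w m / (256 * m) = (w m / 128) * (1 / (2 * m)) := by field_simp; norm_num
      have h5 : w m / 128 ≤ (w m / 2) ^ 3 / 4 := by nlinarith [sq_nonneg (w m - 1 / 2)]
      rw [h3, h4]
      have := mul_le_mul_of_nonneg_right h5 (by positivity : 0 ≤ 1 / (2 * m))
      linarith
    · have hmono : MonotoneOn (fun t => w t - z (2 * m) * t) (Icc m (2 * m)) := by
        refine monotone_Icc ((hcw hm2).sub (by fun_prop)) (fun t ht _ =>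
          (h.derivw (hm0.trans ht)).sub ((hasDerivAt_id t).const_mul _)) fun t ht ht' => ?_
        have := hz ⟨by linarith, by linarith⟩ ⟨by linarith, by linarith⟩ ht'.le
        simpa using this
      have h2 := hmono ⟨le_rfl, by linarith⟩ ⟨by linarith, le_rfl⟩ (by linarith)
      simp only at h2
      rw [← neg_div, le_div_iff₀ (by positivity)]
      nlinarith
  have hanti : AntitoneOn (fun t => w t - z (2 * m) * t) (Icc (2 * m) (258 * m)) := by
    refine antitone_Icc ((hcw (by linarith)).sub (by fun_prop)) (fun t ht _ =>
      (h.derivw (by linarith)).sub ((hasDerivAt_id t).const_mul _)) fun t ht ht' => ?_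
    have := hz ⟨by linarith, by linarith⟩ ⟨by linarith, by linarith⟩ ht.le
    simpa using this
  have h1 := hanti ⟨le_rfl, by linarith⟩ ⟨by linarith, le_rfl⟩ (by linarith)
  have h2 := hpos (258 * m) (by linarith) (by linarith)
  have h3 := hwd ⟨le_rfl, by linarith⟩ ⟨by linarith, by linarith⟩ (by linarith : m ≤ 2 * m)
  rw [← neg_div, le_div_iff₀ (by positivity)] at hz2
  simp only at h1
  nlinarith

/-- Starting from a zero with slope `s > 0`, the solution stays close to linear for a time `1 / s`
and reaches height `1 / 2`. -/
lemma first_bump (h : Traj c w z) {x : ℝ} (hx : 0 ≤ x) (h0 : w x = 0) (hs : 0 < z x) :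
    1 / 2 ≤ w (x + 1 / z x) ∧ 0 < z (x + 1 / z x) := by
  set s := z x with hs'
  have hs1 : 0 < 1 / s := by positivity
  have hzm : MonotoneOn (fun t => z t + s ^ 3 * (t - x) ^ 2 / 2) (Icc x (x + 1 / s)) := by
    refine monotone_Icc (f' := fun t => -(w t ^ 3 / sinh t ^ 2) + s ^ 3 * (t - x)) ?_ ?_ ?_
    · have := h.contz.mono fun t (ht : t ∈ Icc x (x + 1 / s)) => hx.trans ht.1
      fun_prop
    · intro t ht _
      refine ((h.derivz (hx.trans_lt ht)).add
        (((((hasDerivAt_id t).sub_const x).pow 2).const_mul (s ^ 3)).div_const 2)).congr_deriv ?_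
      simp
      ring
    · intro t ht _
      have h1 := h.abs_w_le' hx ht.le h0
      rw [← hs', abs_of_pos hs] at h1
      have h2 : |w t| ^ 3 ≤ (s * (t - x)) ^ 3 := pow_le_pow_left₀ (abs_nonneg _) h1 3
      have ht0 := hx.trans_lt ht
      have h4 : w t ^ 3 / sinh t ^ 2 ≤ s ^ 3 * (t - x) := by
        have hS := sinh_pos' ht0
        rw [div_le_iff₀ (by positivity)]
        have h5 : (t - x) ^ 2 ≤ sinh t ^ 2 :=
          pow_le_pow_left₀ (by linarith) (by linarith [self_le_sinh ht0.le]) 2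
        calc w t ^ 3 ≤ |w t| ^ 3 := by rw [← abs_pow]; exact le_abs_self _
          _ ≤ (s * (t - x)) ^ 3 := h2
          _ = s ^ 3 * (t - x) * (t - x) ^ 2 := by ring
          _ ≤ _ := mul_le_mul_of_nonneg_left h5
            (mul_nonneg (by positivity) (by linarith))
      linarith
  have hz : ∀ t, x ≤ t → t ≤ x + 1 / s → s / 2 ≤ z t := by
    intro t ht ht'
    have h1 := hzm ⟨le_rfl, by linarith⟩ ⟨ht, ht'⟩ ht
    simp only [sub_self, ← hs'] at h1
    have h2 : s * (t - x) ≤ 1 := by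
      have : t - x ≤ 1 / s := by linarith
      rwa [le_div_iff₀ hs, mul_comm] at this
    have h3 : s ^ 3 * (t - x) ^ 2 ≤ s := by
      have h4 : (s * (t - x)) ^ 2 ≤ 1 := pow_le_one₀ (mul_nonneg hs.le (by linarith)) h2
      nlinarith
    linarith
  constructor
  · have hm : MonotoneOn (fun t => w t - s / 2 * t) (Icc x (x + 1 / s)) := by
      refine monotone_Icc ((h.contw.mono fun t ht => hx.trans ht.1).sub (by fun_prop))
        (fun t ht _ => (h.derivw (hx.trans_lt ht)).sub ((hasDerivAt_id t).const_mul _))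
        fun t ht ht' => ?_
      simpa using hz t ht.le ht'.le
    have h1 := hm ⟨le_rfl, by linarith⟩ ⟨by linarith, le_rfl⟩ (by linarith)
    simp only [h0] at h1
    have h2 : s / 2 * (x + 1 / s) = s / 2 * x + 1 / 2 := by field_simp
    linarith
  · exact lt_of_lt_of_le (by linarith) (hz _ (by linarith) le_rfl)

/-- The energy multiplied by `sinh²` is nondecreasing. Since it dominates `w⁴ / 4` where `w` is
large, it bounds the slope at the next zero from below. -/
lemma scaled_energy (h : Traj c w z) {x y : ℝ} (hx : 0 ≤ x) (hxy : x ≤ y) :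
    sinh x ^ 2 * z x ^ 2 / 2 + w x ^ 4 / 4 ≤ sinh y ^ 2 * z y ^ 2 / 2 + w y ^ 4 / 4 := by
  have hm : MonotoneOn (fun t => sinh t ^ 2 * z t ^ 2 / 2 + w t ^ 4 / 4) (Icc x y) := by
    refine monotone_Icc (f' := fun t => sinh t * cosh t * z t ^ 2) ?_ ?_ ?_
    · have := h.contz.mono fun t (ht : t ∈ Icc x y) => hx.trans ht.1
      have := h.contw.mono fun t (ht : t ∈ Icc x y) => hx.trans ht.1
      fun_prop
    · intro t ht _
      have hS := (sinh_pos' (hx.trans_lt ht)).ne'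
      refine (((((hasDerivAt_sinh t).pow 2).mul ((h.derivz (hx.trans_lt ht)).pow 2)).div_const
        2).add (((h.derivw (hx.trans_lt ht)).pow 4).div_const 4)).congr_deriv ?_
      simp
      field_simp
      ring
    · intro t ht _
      have := sinh_pos' (hx.trans_lt ht)
      have := cosh_pos t
      positivity
  exact hm ⟨le_rfl, hxy⟩ ⟨hxy, le_rfl⟩ hxy

/-- A zero `x` whose slope is large compared with the scale of the problem is followed by another
one, at a comparable distance from the origin and with slope at least a constant over that
distance. -/
lemma next_zero (h : Traj c w z) {x : ℝ} (hx : 0 ≤ x) (h0 : w x = 0) (hs : z x ≠ 0)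
    (h1 : ratio * (x + 1 / |z x|) ≤ 1) :
    ∃ y, x < y ∧ y ≤ ratio * (x + 1 / |z x|) ∧ w y = 0 ∧ z y ≠ 0 ∧ 1 / |z y| ≤ 12 * y := by
  -- The system is odd, so the slope at `x` may be assumed positive.
  wlog hpos : 0 < z x generalizing c w z
  · have hneg : 0 < -z x := by
      rcases lt_or_gt_of_ne hs with h | h
      · linarith
      · exact absurd h hpos
    simpa using this h.neg (by simpa using h0) (by simpa using hs) (by simpa using h1) hneg
  rw [abs_of_pos hpos] at h1 ⊢
  obtain ⟨hw, hz⟩ := h.first_bump hx h0 hpos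
  set y := x + 1 / z x with hy
  have hxy : x < y := by rw [hy]; linarith [one_div_pos.2 hpos]
  have hy0 : 0 < y := hx.trans_lt hxy
  have hr1 : 1 ≤ ratio := by
    have : (1:ℝ) < exp 16 := by simp
    unfold ratio
    linarith
  have hex : ∃ t, y ≤ t ∧ t ≤ ratio * y ∧ w t ≤ 0 := by
    by_contra! hcon
    exact h.not_pos hy0 h1 hw hz hcon
  obtain ⟨t, hyt, htr, hwt⟩ := hex
  obtain ⟨v, hv, hwv⟩ := intermediate_value_Icc' hyt
    (h.contw.mono fun t ht => hy0.le.trans ht.1)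
    (⟨hwt, by linarith⟩ : (0:ℝ) ∈ Icc (w t) (w y))
  have hv0 : 0 < v := hy0.trans_le hv.1
  have hE := h.scaled_energy hy0.le hv.1
  have h4 : (1 / 2) ^ 4 ≤ w y ^ 4 := pow_le_pow_left₀ (by norm_num) hw 4
  have h5 : 0 ≤ sinh y ^ 2 * z y ^ 2 / 2 := by positivity
  rw [hwv] at hE
  have hsv := sinh_pos' hv0
  have h6 : sinh v ^ 2 ≤ (2 * v) ^ 2 :=
    pow_le_pow_left₀ hsv.le (sinh_le_two_mul hv0.le ((hv.2.trans htr).trans h1)) 2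
  have h7 : 1 / 128 ≤ (v * |z v|) ^ 2 := by
    rw [mul_pow, sq_abs]
    have := mul_le_mul_of_nonneg_right h6 (sq_nonneg (z v))
    nlinarith
  have hzv : z v ≠ 0 := by
    intro h8
    rw [h8] at h7
    norm_num at h7
  refine ⟨v, hxy.trans_le hv.1, hv.2.trans htr, hwv, hzv, ?_⟩
  have hzv_pos := abs_pos.2 hzv
  rw [div_le_iff₀ hzv_pos]
  by_contra! h9
  have : v * |z v| < 1 / 12 := by linarith
  nlinarith [mul_pos hv0 hzv_pos]

/-- An angle beyond `k π` that strictly increases to a multiple of `π` has reached `(k + 1) π`. -/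
lemma pi_step {a b : ℝ} (hb : sin b = 0) (hab : a < b) {k : ℕ}
    (hk : k * π ≤ a) : ((k + 1 : ℕ) : ℝ) * π ≤ b := by
  obtain ⟨j, rfl⟩ := sin_eq_zero_iff.1 hb
  have h1 : (k : ℝ) * π < j * π := lt_of_le_of_lt hk hab
  have h2 : (k : ℝ) < j := lt_of_mul_lt_mul_right h1 pi_pos.le
  have h3 : (k : ℤ) < j := by exact_mod_cast h2
  have h4 : ((k + 1 : ℕ) : ℝ) ≤ j := by
    have : ((k + 1 : ℕ) : ℤ) ≤ j := by push_cast; omega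
    exact_mod_cast this
  exact mul_le_mul_of_nonneg_right h4 pi_pos.le

end Traj

/-- For large initial slope `c`, there is a zero at a distance of order `1 / c` from the origin at
which the angle has reached `k π`. The induction also carries the inverse of the slope at that
zero. -/
lemma many_zeros (k : ℕ) : ∃ B : ℝ, 0 < B ∧ ∀ c w z, Traj c w z → B ≤ c →
    ∃ x, 0 ≤ x ∧ w x = 0 ∧ z x ≠ 0 ∧ x + 1 / |z x| ≤ B / c ∧ k * π ≤ angle w z x := by
  induction k with
  | zero =>
    refine ⟨1, one_pos, fun c w z h hc => ⟨0, le_rfl, h.w0, ?_, ?_, ?_⟩⟩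
    · rw [h.z0]; linarith
    · rw [h.z0, abs_of_pos (by linarith)]; simp
    · simp [Traj.angle_zero]
  | succ k ih =>
    obtain ⟨B, hB, ih⟩ := ih
    have hr1 : 1 ≤ Traj.ratio := by
      have : (1:ℝ) < exp 16 := by simp
      unfold Traj.ratio
      linarith
    refine ⟨13 * Traj.ratio * B, by positivity, fun c w z h hc => ?_⟩
    have hc1 : Traj.ratio * B ≤ c := by nlinarith
    have hc2 : B ≤ c := by nlinarith
    have hc0 : 0 < c := hB.trans_le hc2
    obtain ⟨x, hx, hw, hz, hle, hk⟩ := ih c w z h hc2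
    have h1 : Traj.ratio * (x + 1 / |z x|) ≤ Traj.ratio * (B / c) :=
      mul_le_mul_of_nonneg_left hle (by linarith)
    have h2 : Traj.ratio * (B / c) ≤ 1 := by
      rw [← mul_div_assoc]; exact (div_le_one hc0).2 hc1
    obtain ⟨y, hxy, hy, hwy, hzy, hzy'⟩ := h.next_zero hx hw hz (h1.trans h2)
    refine ⟨y, hx.trans hxy.le, hwy, hzy, ?_, ?_⟩
    · have : 13 * Traj.ratio * B / c = 13 * (Traj.ratio * (B / c)) := by ring
      rw [this]
      linarith
    · exact Traj.pi_step
        ((h.zero_iff hc0.ne' (hx.trans hxy.le)).1 hwy) (h.angle_lt hc0.ne' hx hxy) hk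

/-! ### The threshold initial slope -/

namespace Traj
variable {c : ℝ} {w z : ℝ → ℝ}

/-- A positive slope exceeding the tail weight keeps exceeding it. -/
lemma tail_lower (h : Traj c w z) {a x : ℝ} (ha : 0 ≤ a) (hx : a ≤ x) :
    z a - |c| ^ 3 * Q a + |c| ^ 3 * Q x ≤ z x := by
  have h1 := h.tail ha (fun t ht => h.abs_w_le (ha.trans ht)) le_rfl hx
  have h2 := (abs_le.1 h1).1
  linarith

/-- If the slope ever exceeds the tail weight in absolute value, then `w` eventually moves away
from zero, still with slope above the tail weight. -/
lemma escape (h : Traj c w z) (hc : c ≠ 0) {a : ℝ} (ha : 0 ≤ a) (hz : |c| ^ 3 * Q a < |z a|) :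
    ∃ x, a ≤ x ∧ 0 < w x * z x ∧ |c| ^ 3 * Q x < |z x| := by
  wlog hpos : 0 < z a generalizing c w z
  · have h0 : 0 < |c| ^ 3 * Q a := mul_pos (pow_pos (abs_pos.2 hc) 3) (Q_pos a)
    have hneg : 0 < -z a := by
      rcases lt_trichotomy (z a) 0 with h1 | h1 | h1
      · linarith
      · rw [h1, abs_zero] at hz; linarith
      · exact absurd h1 hpos
    simpa using this h.neg (by simpa using hc) (by simpa using hz) hneg
  rw [abs_of_pos hpos] at hz
  set η := z a - |c| ^ 3 * Q a with hη
  have hη0 : 0 < η := by linarith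
  have hQ : ∀ x, 0 < |c| ^ 3 * Q x := fun x => mul_pos (pow_pos (abs_pos.2 hc) 3) (Q_pos x)
  have hzx : ∀ x, a ≤ x → η + |c| ^ 3 * Q x ≤ z x := fun x hx => h.tail_lower ha hx
  set b := a + (|w a| + 1) / η with hb
  have hab : a ≤ b := by
    have : 0 < (|w a| + 1) / η := by positivity
    linarith
  have hm : MonotoneOn (fun t => w t - η * t) (Icc a b) := by
    refine monotone_Icc ((h.contw.mono fun t ht => ha.trans ht.1).sub (by fun_prop))
      (fun t ht _ => (h.derivw (ha.trans_lt ht)).sub ((hasDerivAt_id t).const_mul _))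
      fun t ht _ => ?_
    have := hzx t ht.le
    have := hQ t
    simp only [mul_one]
    linarith
  have h1 := hm ⟨le_rfl, hab⟩ ⟨hab, le_rfl⟩ hab
  have h2 : η * b = η * a + (|w a| + 1) := by rw [hb]; field_simp
  have h3 := neg_abs_le (w a)
  simp only [h2] at h1
  have h4 := hzx b hab
  have h5 := hQ b
  refine ⟨b, hab, mul_pos (by linarith) (by linarith), ?_⟩
  rw [abs_of_pos (show 0 < z b by linarith)]
  linarith

/-- Once `w` moves away from zero with slope above the tail weight, it never vanishes again. The
hypotheses are strict inequalities at one point, hence stable under perturbing the initial slope.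
-/
lemma no_return (h : Traj c w z) (hc : c ≠ 0) {a x : ℝ} (ha : 0 ≤ a) (hwz : 0 < w a * z a)
    (hz : |c| ^ 3 * Q a < |z a|) (hx : a ≤ x) : w x ≠ 0 := by
  wlog hpos : 0 < z a generalizing c w z
  · have hneg : 0 < -z a := by
      rcases lt_trichotomy (z a) 0 with h1 | h1 | h1
      · linarith
      · rw [h1, mul_zero] at hwz; exact absurd hwz (lt_irrefl _)
      · exact absurd h1 hpos
    simpa using this h.neg (by simpa using hc) (by simpa using hwz) (by simpa using hz) hneg
  rw [abs_of_pos hpos] at hz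
  have hw : 0 < w a := pos_of_mul_pos_left hwz hpos.le
  have hQ : ∀ x, 0 < |c| ^ 3 * Q x := fun x => mul_pos (pow_pos (abs_pos.2 hc) 3) (Q_pos x)
  have hm : MonotoneOn w (Icc a x) := by
    refine monotone_Icc (h.contw.mono fun t ht => ha.trans ht.1)
      (fun t ht _ => h.derivw (ha.trans_lt ht)) fun t ht _ => ?_
    have := h.tail_lower ha ht.le
    have := hQ t
    linarith
  exact (hw.trans_le (hm ⟨le_rfl, hx⟩ ⟨hx, le_rfl⟩ hx)).ne'

lemma exists_angle_eq (h : Traj c w z) (hc : c ≠ 0) {a b v : ℝ} (ha : 0 ≤ a) (hab : a ≤ b)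
    (hav : angle w z a ≤ v) (hvb : v ≤ angle w z b) : ∃ x, a ≤ x ∧ x ≤ b ∧ angle w z x = v := by
  obtain ⟨x, hx, hv⟩ := intermediate_value_Icc hab
    ((h.contAngle hc (ha.trans hab)).mono (Icc_subset_Icc_left ha)) ⟨hav, hvb⟩
  exact ⟨x, hx.1, hx.2, hv⟩

lemma eq_zero_of_angle (h : Traj c w z) (hc : c ≠ 0) {x : ℝ} (hx : 0 ≤ x) (k : ℕ)
    (hk : angle w z x = k * π) : w x = 0 := by
  rw [h.zero_iff hc hx, hk, sin_nat_mul_pi]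

lemma z_ne_zero (h : Traj c w z) (hc : c ≠ 0) {x : ℝ} (hx : 0 ≤ x) (h0 : w x = 0) : z x ≠ 0 := by
  intro hz
  have := h.radius_pos hc hx
  simp [h0, hz] at this

end Traj

/-- The threshold `c = inf S`, where `S` is the set of slopes whose angle exceeds `(n + 1) π`. The
angle for `c` stays below `(n + 1) π`. Its slope decays like `Q`, as otherwise `w` would escape
and nearby slopes in `S` would have no room for the `(n + 1)`-st zero; and its angle reaches `n
π`, as otherwise nearby slopes in `S` would have two late zeros, contradicting `ne_zero_of_small`.
-/
theorem exists_decaying (n : ℕ) : ∃ c w z, 0 < c ∧ Traj c w z ∧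
    (∀ x, 0 ≤ x → |z x| ≤ c ^ 3 * Q x) ∧
    (∀ x, 0 ≤ x → angle w z x < (n + 1 : ℕ) * π) ∧ ∃ x, 0 ≤ x ∧ n * π ≤ angle w z x := by
  obtain ⟨W, Z, hF⟩ := exists_family
  set S : Set ℝ := {c | 0 < c ∧ ∃ x, 0 ≤ x ∧ (n + 1 : ℕ) * π < angle (W c) (Z c) x} with hS
  have hSne : S.Nonempty := by
    obtain ⟨B, hB, h⟩ := many_zeros (n + 2)
    obtain ⟨x, hx, -, -, -, hk⟩ := h B (W B) (Z B) (hF B hB) le_rfl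
    refine ⟨B, hB, x, hx, lt_of_lt_of_le ?_ hk⟩
    refine mul_lt_mul_of_pos_right ?_ pi_pos
    push_cast
    linarith
  -- For `c < 1 / 5` we have `c² * Q 0 < 1`, so there is no zero after `0` at all.
  have hSlow : ∀ c ∈ S, 1 / 5 ≤ c := by
    rintro c ⟨hc, x, hx, hk⟩
    by_contra! hlt
    have h := hF c hc
    obtain ⟨y, hy, -, hyπ⟩ := h.exists_angle_eq hc.ne' le_rfl hx (v := (1 : ℕ) * π)
      (by rw [Traj.angle_zero]; positivity)
      (by refine le_trans (mul_le_mul_of_nonneg_right ?_ pi_pos.le) hk.le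
          push_cast
          linarith [n.cast_nonneg (α := ℝ)])
    have hy0 : 0 < y := by
      refine hy.lt_of_ne fun h0 => ?_
      rw [← h0, Traj.angle_zero] at hyπ
      have := pi_pos
      simp at hyπ
      linarith
    refine h.ne_zero_of_small le_rfl h.w0 (by rw [h.z0]; exact hc.ne') ?_ hy0
      (h.eq_zero_of_angle hc.ne' hy 1 hyπ)
    rw [h.z0, Q]
    norm_num
    nlinarith
  have hbdd : BddBelow S := ⟨1 / 5, hSlow⟩
  set c := sInf S with hcdef
  have hc : 0 < c := lt_of_lt_of_le (by norm_num) (le_csInf hSne hSlow)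
  have h := hF c hc
  have hfreq : ∃ᶠ d in 𝓝 c, d ∈ S := mem_closure_iff_frequently.1 (csInf_mem_closure hSne hbdd)
  have hev : ∀ᶠ d in 𝓝 c, d ∈ Ioo 0 (c + 1) := Ioo_mem_nhds hc (by linarith)
  -- The condition defining `S` is open, so `S` contains slopes below any of its elements.
  have hle : ∀ x, 0 ≤ x → angle (W c) (Z c) x ≤ (n + 1 : ℕ) * π := by
    intro x hx
    by_contra! hlt
    have h1 := ((hF.continuousAt_angle hc hx).eventually (lt_mem_nhds hlt)).and hev
    obtain ⟨d, hd1, hd2⟩ := ((h1.filter_mono nhdsWithin_le_nhds).and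
      (self_mem_nhdsWithin : Iio c ∈ 𝓝[<] c)).exists
    exact absurd (csInf_le hbdd ⟨hd1.2.1, x, hx, hd1.1⟩ : sInf S ≤ d) (not_le.2 hd2)
  have hlt : ∀ x, 0 ≤ x → angle (W c) (Z c) x < (n + 1 : ℕ) * π := fun x hx =>
    (h.angle_lt hc.ne' hx (lt_add_one x)).trans_le (hle _ (by linarith))
  refine ⟨c, W c, Z c, hc, h, ?_, hlt, ?_⟩
  · intro x hx
    by_contra! hzx
    have hzx' : |c| ^ 3 * Q x < |Z c x| := by rwa [abs_of_pos hc]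
    obtain ⟨y, hxy, hwz, hzy⟩ := h.escape hc.ne' hx hzx'
    have hy := hx.trans hxy
    obtain ⟨hcW, hcZ⟩ := hF.continuousAt_wz hc hy
    have e1 : ∀ᶠ d in 𝓝 c, 0 < W d y * Z d y := (hcW.mul hcZ).eventually (lt_mem_nhds hwz)
    have e2 : ∀ᶠ d in 𝓝 c, |d| ^ 3 * Q y < |Z d y| :=
      ContinuousAt.eventually_lt (by fun_prop) hcZ.abs hzy
    have e3 : ∀ᶠ d in 𝓝 c, angle (W d) (Z d) y < (n + 1 : ℕ) * π :=
      (hF.continuousAt_angle hc hy).eventually (gt_mem_nhds (hlt y hy))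
    obtain ⟨d, ⟨hd, u, hu, hdu⟩, h1, h2, h3⟩ := (hfreq.and_eventually (e1.and (e2.and e3))).exists
    have hyu : y ≤ u := by
      by_contra! hcon
      exact absurd ((hF d hd).angle_lt hd.ne' hu hcon) (by linarith)
    obtain ⟨v, hv, -, hvπ⟩ := (hF d hd).exists_angle_eq hd.ne' hy hyu h3.le hdu.le
    exact (hF d hd).no_return hd.ne' hy h1 h2 hv
      ((hF d hd).eq_zero_of_angle hd.ne' (hy.trans hv) _ hvπ)
  -- Beyond `X` the tail weight is so small that slopes bounded by `c + 1` allow only one zero.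
  · have hQ : Tendsto (fun x => (c + 1) ^ 2 * Q x) atTop (𝓝 0) := by
      simpa using tendsto_Q.const_mul ((c + 1) ^ 2)
    obtain ⟨X, hX1, hX0⟩ := ((hQ.eventually (gt_mem_nhds one_pos)).and
      (eventually_ge_atTop (0:ℝ))).exists
    refine ⟨X, hX0, ?_⟩
    by_contra! hlt'
    have e3 : ∀ᶠ d in 𝓝 c, angle (W d) (Z d) X < n * π :=
      (hF.continuousAt_angle hc hX0).eventually (gt_mem_nhds hlt')
    obtain ⟨d, ⟨hd, u, hu, hdu⟩, h3, h4⟩ := (hfreq.and_eventually (e3.and hev)).exists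
    have hd' := hF d hd
    have hnn : (n : ℝ) * π < (n + 1 : ℕ) * π :=
      mul_lt_mul_of_pos_right (by push_cast; linarith) pi_pos
    have hXu : X ≤ u := by
      by_contra! hcon
      exact absurd (hd'.angle_lt hd.ne' hu hcon) (by linarith)
    obtain ⟨v, hv, hvu, hvπ⟩ := hd'.exists_angle_eq hd.ne' hX0 hXu h3.le (hnn.le.trans hdu.le)
    have hv0 := hX0.trans hv
    obtain ⟨q, hvq, -, hqπ⟩ := hd'.exists_angle_eq hd.ne' hv0 hvu
      (hvπ.le.trans hnn.le) hdu.le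
    have hvq' : v < q := hvq.lt_of_ne fun heq => by
      rw [heq, hqπ] at hvπ
      exact hnn.ne' hvπ
    have hwv := hd'.eq_zero_of_angle hd.ne' hv0 _ hvπ
    refine hd'.ne_zero_of_small hv0 hwv (hd'.z_ne_zero hd.ne' hv0 hwv) ?_ hvq'
      (hd'.eq_zero_of_angle hd.ne' (hv0.trans hvq) _ hqπ)
    have h5 : Z d v ^ 2 ≤ (c + 1) ^ 2 := by
      rw [← sq_abs]
      refine pow_le_pow_left₀ (abs_nonneg _) ((hd'.bd v hv0).trans ?_) 2
      rw [abs_of_pos hd]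
      exact h4.2.le
    exact (mul_le_mul h5 (Q_le hX0 hv) (Q_pos v).le (by positivity)).trans_lt hX1

lemma Traj.encard_zeros {c : ℝ} {w z : ℝ → ℝ} (h : Traj c w z) (hc : c ≠ 0) {n : ℕ}
    (hlt : ∀ x, 0 ≤ x → angle w z x < (n + 1 : ℕ) * π) (hge : ∃ x, 0 ≤ x ∧ n * π ≤ angle w z x) :
    {x : ℝ | 0 < x ∧ w x = 0}.encard = n := by
  have hinj : InjOn (angle w z) {x : ℝ | 0 < x ∧ w x = 0} := by
    intro x hx y hy hxy
    rcases lt_trichotomy x y with h1 | h1 | h1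
    · exact absurd hxy (h.angle_lt hc hx.1.le h1).ne
    · exact h1
    · exact absurd hxy (h.angle_lt hc hy.1.le h1).ne'
  have himg : angle w z '' {x : ℝ | 0 < x ∧ w x = 0} =
      (fun k : ℕ => (k : ℝ) * π) '' (Finset.Icc 1 n : Finset ℕ) := by
    ext v
    simp only [mem_image, mem_ofPred_eq, Finset.coe_Icc, mem_Icc]
    constructor
    · rintro ⟨x, ⟨hx, hwx⟩, rfl⟩
      obtain ⟨j, hj⟩ := sin_eq_zero_iff.1 ((h.zero_iff hc hx.le).1 hwx)
      have h1 := h.angle_lt hc le_rfl hx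
      rw [Traj.angle_zero, ← hj] at h1
      have h2 := hlt x hx.le
      rw [← hj] at h2
      have h3 : (0:ℝ) < j := pos_of_mul_pos_left h1 pi_pos.le
      have h4 : (j:ℝ) < (n + 1 : ℕ) := lt_of_mul_lt_mul_right h2 pi_pos.le
      have h5 : 0 < j := by exact_mod_cast h3
      have h6 : j < (n + 1 : ℕ) := by exact_mod_cast h4
      refine ⟨j.toNat, by omega, ?_⟩
      rw [← hj]
      congr 1
      have : ((j.toNat : ℤ) : ℝ) = j := by rw [Int.toNat_of_nonneg h5.le]
      exact_mod_cast this
    · rintro ⟨k, ⟨hk1, hkn⟩, rfl⟩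
      obtain ⟨X, hX, hXn⟩ := hge
      obtain ⟨x, hx, -, hxk⟩ := h.exists_angle_eq hc le_rfl hX (v := k * π)
        (by rw [Traj.angle_zero]; positivity)
        (le_trans (mul_le_mul_of_nonneg_right (by exact_mod_cast hkn) pi_pos.le) hXn)
      refine ⟨x, ⟨hx.lt_of_ne fun h0 => ?_, h.eq_zero_of_angle hc hx k hxk⟩, hxk⟩
      rw [← h0, Traj.angle_zero] at hxk
      have : (0:ℝ) < k * π := mul_pos (by exact_mod_cast hk1) pi_pos
      linarith
  have hinj2 : Function.Injective fun k : ℕ => (k : ℝ) * π := by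
    intro a b hab
    have := mul_right_cancel₀ pi_pos.ne' hab
    exact_mod_cast this
  rw [← hinj.encard_image, himg, hinj2.encard_image, encard_coe_eq_coe_finsetCard]
  simp

/-! ### Extension to a twice differentiable function on the closed interval -/

/-- The function `g` on `(0, 1)`, extended by the value `l` at `0` (and to the left) and the value
`m` at `1` (and to the right). -/
noncomputable def glue (l m : ℝ) (g : ℝ → ℝ) (x : ℝ) : ℝ :=
  if x ≤ 0 then l else if 1 ≤ x then m else g x

lemma glue_zero (l m : ℝ) (g : ℝ → ℝ) : glue l m g 0 = l := by simp [glue]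
lemma glue_one (l m : ℝ) (g : ℝ → ℝ) : glue l m g 1 = m := by simp [glue]
lemma glue_eq {l m : ℝ} {g : ℝ → ℝ} {x : ℝ} (hx : x ∈ Ioo (0:ℝ) 1) : glue l m g x = g x := by
  rw [glue, if_neg (not_le.2 hx.1), if_neg (not_le.2 hx.2)]

lemma glue_eventuallyEq {l m : ℝ} {g : ℝ → ℝ} {x : ℝ} (hx : x ∈ Ioo (0:ℝ) 1) :
    glue l m g =ᶠ[𝓝 x] g := by
  filter_upwards [Ioo_mem_nhds hx.1 hx.2] with y hy using glue_eq hy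

lemma glue_eventuallyEq_right {l m : ℝ} {g : ℝ → ℝ} : glue l m g =ᶠ[𝓝[>] 0] g := by
  filter_upwards [Ioo_mem_nhdsGT (zero_lt_one' ℝ)] with y hy using glue_eq hy

lemma glue_eventuallyEq_left {l m : ℝ} {g : ℝ → ℝ} : glue l m g =ᶠ[𝓝[<] 1] g := by
  filter_upwards [Ioo_mem_nhdsLT (zero_lt_one' ℝ)] with y hy using glue_eq hy

lemma continuousOn_glue {l m : ℝ} {g : ℝ → ℝ} (hg : ContinuousOn g (Ioo 0 1))
    (hl : Tendsto g (𝓝[>] 0) (𝓝 l)) (hm : Tendsto g (𝓝[<] 1) (𝓝 m)) :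
    ContinuousOn (glue l m g) (Icc 0 1) := by
  intro x hx
  rcases hx.1.eq_or_lt with rfl | h0
  · have : ContinuousWithinAt (glue l m g) (Ioi 0) 0 := by
      rw [ContinuousWithinAt, glue_zero]
      exact hl.congr' glue_eventuallyEq_right.symm
    exact (continuousWithinAt_Ioi_iff_Ici.1 this).mono Icc_subset_Ici_self
  rcases hx.2.eq_or_lt with rfl | h1
  · have : ContinuousWithinAt (glue l m g) (Iio 1) 1 := by
      rw [ContinuousWithinAt, glue_one]
      exact hm.congr' glue_eventuallyEq_left.symm
    exact (continuousWithinAt_Iio_iff_Iic.1 this).mono Icc_subset_Iic_self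
  · exact ((hg.continuousAt (Ioo_mem_nhds h0 h1)).congr
      (glue_eventuallyEq ⟨h0, h1⟩).symm).continuousWithinAt

lemma hasDerivWithinAt_glue {l m l' m' : ℝ} {g g' : ℝ → ℝ}
    (hg : ∀ x ∈ Ioo (0:ℝ) 1, HasDerivAt g (g' x) x)
    (hl : Tendsto g (𝓝[>] 0) (𝓝 l)) (hm : Tendsto g (𝓝[<] 1) (𝓝 m))
    (hl' : Tendsto g' (𝓝[>] 0) (𝓝 l')) (hm' : Tendsto g' (𝓝[<] 1) (𝓝 m')) :
    ∀ x ∈ Icc (0:ℝ) 1, HasDerivWithinAt (glue l m g) (glue l' m' g' x) (Icc 0 1) x := by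
  have hc := continuousOn_glue (fun x hx => (hg x hx).continuousAt.continuousWithinAt) hl hm
  have hd : ∀ x ∈ Ioo (0:ℝ) 1, HasDerivAt (glue l m g) (g' x) x := fun x hx =>
    (hg x hx).congr_of_eventuallyEq (glue_eventuallyEq hx)
  have hdo : DifferentiableOn ℝ (glue l m g) (Ioo 0 1) := fun x hx =>
    (hd x hx).differentiableAt.differentiableWithinAt
  intro x hx
  rcases hx.1.eq_or_lt with rfl | h0
  · rw [glue_zero]
    refine (hasDerivWithinAt_Ici_of_tendsto_deriv hdo ((hc 0 hx).mono Ioo_subset_Icc_self)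
      (Ioo_mem_nhdsGT zero_lt_one) (hl'.congr' ?_)).mono Icc_subset_Ici_self
    filter_upwards [Ioo_mem_nhdsGT (zero_lt_one' ℝ)] with y hy using (hd y hy).deriv.symm
  rcases hx.2.eq_or_lt with rfl | h1
  · rw [glue_one]
    refine (hasDerivWithinAt_Iic_of_tendsto_deriv hdo ((hc 1 hx).mono Ioo_subset_Icc_self)
      (Ioo_mem_nhdsLT zero_lt_one) (hm'.congr' ?_)).mono Icc_subset_Iic_self
    filter_upwards [Ioo_mem_nhdsLT (zero_lt_one' ℝ)] with y hy using (hd y hy).deriv.symm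
  · rw [glue_eq ⟨h0, h1⟩]
    exact (hd x ⟨h0, h1⟩).hasDerivWithinAt

/-- Finite limits of `g`, `g'` and `g''` at both endpoints give a `C²` extension to `[0, 1]`. -/
lemma contDiffOn_glue {l m l' m' l'' m'' : ℝ} {g g' g'' : ℝ → ℝ}
    (hg : ∀ x ∈ Ioo (0:ℝ) 1, HasDerivAt g (g' x) x)
    (hg' : ∀ x ∈ Ioo (0:ℝ) 1, HasDerivAt g' (g'' x) x) (hg'' : ContinuousOn g'' (Ioo 0 1))
    (hl : Tendsto g (𝓝[>] 0) (𝓝 l)) (hm : Tendsto g (𝓝[<] 1) (𝓝 m))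
    (hl' : Tendsto g' (𝓝[>] 0) (𝓝 l')) (hm' : Tendsto g' (𝓝[<] 1) (𝓝 m'))
    (hl'' : Tendsto g'' (𝓝[>] 0) (𝓝 l'')) (hm'' : Tendsto g'' (𝓝[<] 1) (𝓝 m'')) :
    ContDiffOn ℝ 2 (glue l m g) (Icc 0 1) := by
  have hu : UniqueDiffOn ℝ (Icc (0:ℝ) 1) := uniqueDiffOn_Icc zero_lt_one
  have h1 := hasDerivWithinAt_glue hg hl hm hl' hm'
  have h2 := hasDerivWithinAt_glue hg' hl' hm' hl'' hm''
  have h3 := continuousOn_glue hg'' hl'' hm''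
  have key : ∀ {n : WithTop ℕ∞} {f f' : ℝ → ℝ}, n ≠ (⊤ : WithTop ℕ∞) →
      (∀ x ∈ Icc (0:ℝ) 1, HasDerivWithinAt f (f' x) (Icc 0 1) x) →
      ContDiffOn ℝ n f' (Icc 0 1) → ContDiffOn ℝ (n + 1) f (Icc 0 1) := by
    intro n f f' hn hf hf'
    refine (contDiffOn_succ_iff_derivWithin hu).2
      ⟨fun x hx => (hf x hx).differentiableWithinAt, fun h => absurd h hn, hf'.congr fun x hx => ?_⟩
    exact (hf x hx).derivWithin (hu x hx)
  have h4 := key (n := 1) (by simp) h1 (by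
    have := key (n := 0) (by simp) h2 (contDiffOn_zero.2 h3)
    simpa using this)
  rwa [one_add_one_eq_two] at h4

/-- `Profile c a A Y`: the functions `A = ρ U` and `Y = (1 - ρ²) A'` on `(0, 1)`, where `U` solves
the profile equation, with `U(0) = c` and `A(1) = a` in the sense of limits. This is the system of
`Traj` in the variable `ρ = tanh x`; the condition `Y → 0` at `1` is what makes `ρ = 1` a regular
point. -/
structure Profile (c a : ℝ) (A Y : ℝ → ℝ) : Prop where
  dA : ∀ ρ ∈ Ioo (0:ℝ) 1, HasDerivAt A (Y ρ / (1 - ρ ^ 2)) ρ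
  dY : ∀ ρ ∈ Ioo (0:ℝ) 1, HasDerivAt Y (-(A ρ ^ 3 / ρ ^ 2)) ρ
  A0 : Tendsto A (𝓝[>] 0) (𝓝 0)
  Y0 : Tendsto Y (𝓝[>] 0) (𝓝 c)
  A1 : Tendsto A (𝓝[<] 1) (𝓝 a)
  Y1 : Tendsto Y (𝓝[<] 1) (𝓝 0)

lemma id_nhdsGT : Tendsto (fun ρ : ℝ => ρ) (𝓝[>] 0) (𝓝 0) := nhdsWithin_le_nhds
lemma id_nhdsLT : Tendsto (fun ρ : ℝ => ρ) (𝓝[<] 1) (𝓝 1) := nhdsWithin_le_nhds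

lemma one_sub_sq_pos {ρ : ℝ} (h : ρ ∈ Ioo (0:ℝ) 1) : 0 < 1 - ρ ^ 2 := by
  nlinarith [h.1, h.2]

namespace Profile
variable {c a : ℝ} {A Y : ℝ → ℝ}

/-- The derivative of `A`. -/
noncomputable def B (Y : ℝ → ℝ) (ρ : ℝ) : ℝ := Y ρ / (1 - ρ ^ 2)
/-- The second derivative of `A`. -/
noncomputable def D (A Y : ℝ → ℝ) (ρ : ℝ) : ℝ := (2 * ρ * B Y ρ - A ρ ^ 3 / ρ ^ 2) / (1 - ρ ^ 2)

lemma dB (h : Profile c a A Y) {ρ : ℝ} (hρ : ρ ∈ Ioo (0:ℝ) 1) : HasDerivAt (B Y) (D A Y ρ) ρ := by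
  have h1 := (one_sub_sq_pos hρ).ne'
  have h0 := hρ.1.ne'
  refine ((h.dY ρ hρ).div ((hasDerivAt_pow 2 ρ).const_sub 1) h1).congr_deriv ?_
  simp only [D, B]
  field_simp
  simp
  ring

lemma evGT {p : ℝ → Prop} (h : ∀ ρ ∈ Ioo (0:ℝ) 1, p ρ) : ∀ᶠ ρ in 𝓝[>] 0, p ρ :=
  mem_of_superset (Ioo_mem_nhdsGT zero_lt_one) h

lemma evLT {p : ℝ → Prop} (h : ∀ ρ ∈ Ioo (0:ℝ) 1, p ρ) : ∀ᶠ ρ in 𝓝[<] 1, p ρ :=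
  mem_of_superset (Ioo_mem_nhdsLT zero_lt_one) h

lemma B0 (h : Profile c a A Y) : Tendsto (B Y) (𝓝[>] 0) (𝓝 c) := by
  have : Tendsto (fun ρ => Y ρ / (1 - ρ ^ 2)) (𝓝[>] 0) (𝓝 (c / (1 - 0 ^ 2))) :=
    h.Y0.div ((id_nhdsGT.pow 2).const_sub 1) (by norm_num)
  rwa [zero_pow two_ne_zero, sub_zero, div_one] at this

lemma Adiv0 (h : Profile c a A Y) : Tendsto (fun ρ => A ρ / ρ) (𝓝[>] 0) (𝓝 c) := by
  refine HasDerivAt.lhopital_zero_nhdsGT (f' := B Y) (g' := fun _ => 1) (evGT h.dA)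
    (Eventually.of_forall fun x => hasDerivAt_id x) (by simp) h.A0 id_nhdsGT (by simpa using h.B0)

/-- `A'' / ρ` has a limit at `0`, in line with the expansion `A = c ρ + O(ρ³)`. -/
lemma Ddiv0 (h : Profile c a A Y) :
    Tendsto (fun ρ => D A Y ρ / ρ) (𝓝[>] 0) (𝓝 (2 * c - c ^ 3)) := by
  have h1 : Tendsto (fun ρ => (2 * B Y ρ - (A ρ / ρ) ^ 3) / (1 - ρ ^ 2)) (𝓝[>] 0)
      (𝓝 ((2 * c - c ^ 3) / (1 - 0 ^ 2))) :=
    ((h.B0.const_mul 2).sub (h.Adiv0.pow 3)).div ((id_nhdsGT.pow 2).const_sub 1) (by norm_num)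
  rw [zero_pow two_ne_zero, sub_zero, div_one] at h1
  refine h1.congr' (evGT fun ρ hρ => ?_)
  have h1 := (one_sub_sq_pos hρ).ne'
  have h0 := hρ.1.ne'
  simp only [D]
  field_simp

/-- By L'Hôpital's rule, as the derivative of `ρ A' - A` is `ρ A''`. -/
lemma H0 (h : Profile c a A Y) : Tendsto (fun ρ => (ρ * B Y ρ - A ρ) / ρ ^ 3) (𝓝[>] 0)
    (𝓝 ((2 * c - c ^ 3) / 3)) := by
  refine HasDerivAt.lhopital_zero_nhdsGT (f' := fun ρ => ρ * D A Y ρ) (g' := fun ρ => 3 * ρ ^ 2)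
    (evGT fun ρ hρ => ?_) (Eventually.of_forall fun x => by simpa using hasDerivAt_pow 3 x)
    (evGT fun ρ hρ => ?_) ?_ ?_ ?_
  · refine (((hasDerivAt_id ρ).mul (h.dB hρ)).sub (h.dA ρ hρ)).congr_deriv ?_
    simp [B]
  · have := hρ.1
    positivity
  · simpa using (id_nhdsGT.mul h.B0).sub h.A0
  · simpa using id_nhdsGT.pow 3
  · refine (h.Ddiv0.div_const 3).congr' (evGT fun ρ hρ => ?_)
    have h0 := hρ.1.ne'
    field_simp

/-- `A' = Y / (1 - ρ²)` has a limit at `1` by L'Hôpital's rule, since `Y → 0` there. -/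
lemma B1 (h : Profile c a A Y) : Tendsto (B Y) (𝓝[<] 1) (𝓝 (a ^ 3 / 2)) := by
  refine HasDerivAt.lhopital_zero_nhdsLT (f' := fun ρ => -(A ρ ^ 3 / ρ ^ 2))
    (g' := fun ρ => -(2 * ρ)) (evLT h.dY) (Eventually.of_forall fun x => by
      simpa using (hasDerivAt_pow 2 x).const_sub 1) (evLT fun ρ hρ => ?_) h.Y1 ?_ ?_
  · simpa using hρ.1.ne'
  · simpa using (id_nhdsLT.pow 2).const_sub 1
  · have : Tendsto (fun ρ => -(A ρ ^ 3 / ρ ^ 2) / -(2 * ρ)) (𝓝[<] 1)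
        (𝓝 (-(a ^ 3 / 1 ^ 2) / -(2 * 1))) :=
      ((h.A1.pow 3).div (id_nhdsLT.pow 2) (by norm_num)).neg.div
        (id_nhdsLT.const_mul 2).neg (by norm_num)
    rwa [neg_div_neg_eq, one_pow, div_one, mul_one] at this

/-- `A''` has a limit at `1`, by L'Hôpital's rule for the quotient with denominator `(1 - ρ²)²`.
-/
lemma D1 (h : Profile c a A Y) : ∃ d, Tendsto (D A Y) (𝓝[<] 1) (𝓝 d) := by
  have hG1 : Tendsto (fun ρ => 3 * A ρ ^ 2 * B Y ρ / ρ ^ 2 - 2 * A ρ ^ 3 / ρ ^ 3) (𝓝[<] 1)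
      (𝓝 (3 * a ^ 2 * (a ^ 3 / 2) / 1 ^ 2 - 2 * a ^ 3 / 1 ^ 3)) :=
    ((((h.A1.pow 2).const_mul 3).mul h.B1).div (id_nhdsLT.pow 2) (by norm_num)).sub
      (((h.A1.pow 3).const_mul 2).div (id_nhdsLT.pow 3) (by norm_num))
  have hL : Tendsto (fun ρ => (2 * B Y ρ - (3 * A ρ ^ 2 * B Y ρ / ρ ^ 2 - 2 * A ρ ^ 3 / ρ ^ 3)) /
      (-4 * ρ)) (𝓝[<] 1) (𝓝 _) :=
    ((h.B1.const_mul 2).sub hG1).div (id_nhdsLT.const_mul (-4)) (by norm_num)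
  refine ⟨_, Tendsto.congr' (f₁ := fun ρ => (2 * ρ * Y ρ - (1 - ρ ^ 2) * (A ρ ^ 3 / ρ ^ 2)) /
    (1 - ρ ^ 2) ^ 2) (evLT fun ρ hρ => ?_) (HasDerivAt.lhopital_zero_nhdsLT
      (f' := fun ρ => 2 * Y ρ -
        (1 - ρ ^ 2) * (3 * A ρ ^ 2 * B Y ρ / ρ ^ 2 - 2 * A ρ ^ 3 / ρ ^ 3))
      (g' := fun ρ => -4 * ρ * (1 - ρ ^ 2)) (evLT fun ρ hρ => ?_) (Eventually.of_forall fun ρ => ?_)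
      (evLT fun ρ hρ => ?_) ?_ ?_ (hL.congr' (evLT fun ρ hρ => ?_)))⟩
  · have h1 := (one_sub_sq_pos hρ).ne'
    have h0 := hρ.1.ne'
    simp only [D, B]
    field_simp
  · have h1 := (one_sub_sq_pos hρ).ne'
    have h0 := hρ.1.ne'
    refine ((((hasDerivAt_id ρ).const_mul 2).mul (h.dY ρ hρ)).sub
      (((hasDerivAt_pow 2 ρ).const_sub 1).mul (((h.dA ρ hρ).pow 3).div (hasDerivAt_pow 2 ρ)
        (pow_ne_zero 2 h0)))).congr_deriv ?_
    simp [B]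
    field_simp
    ring
  · refine (((hasDerivAt_pow 2 ρ).const_sub 1).pow 2).congr_deriv ?_
    simp
    ring
  · have h1 := (one_sub_sq_pos hρ).ne'
    have h0 := hρ.1.ne'
    simp [h0, h1]
  · simpa using ((id_nhdsLT.const_mul 2).mul h.Y1).sub (((id_nhdsLT.pow 2).const_sub 1).mul
      ((h.A1.pow 3).div (id_nhdsLT.pow 2) (by norm_num)))
  · simpa using ((id_nhdsLT.pow 2).const_sub 1).pow 2
  · have h1 := (one_sub_sq_pos hρ).ne'
    have h0 := hρ.1.ne'
    simp only [B]
    field_simp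

/-- The derivative of `U = A / ρ`. -/
noncomputable def U₁ (A Y : ℝ → ℝ) (ρ : ℝ) : ℝ := B Y ρ / ρ - A ρ / ρ ^ 2
/-- The second derivative of `U = A / ρ`. -/
noncomputable def U₂ (A Y : ℝ → ℝ) (ρ : ℝ) : ℝ := D A Y ρ / ρ - 2 * B Y ρ / ρ ^ 2 + 2 * A ρ / ρ ^ 3

lemma dU (h : Profile c a A Y) {ρ : ℝ} (hρ : ρ ∈ Ioo (0:ℝ) 1) :
    HasDerivAt (fun ρ => A ρ / ρ) (U₁ A Y ρ) ρ := by
  have h0 := hρ.1.ne'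
  have h1 := (one_sub_sq_pos hρ).ne'
  refine ((h.dA ρ hρ).div (hasDerivAt_id ρ) h0).congr_deriv ?_
  simp [U₁, B]
  field_simp

lemma dU₁ (h : Profile c a A Y) {ρ : ℝ} (hρ : ρ ∈ Ioo (0:ℝ) 1) :
    HasDerivAt (U₁ A Y) (U₂ A Y ρ) ρ := by
  have h0 := hρ.1.ne'
  have h1 := (one_sub_sq_pos hρ).ne'
  refine (((h.dB hρ).div (hasDerivAt_id ρ) h0).sub ((h.dA ρ hρ).div (hasDerivAt_pow 2 ρ)
    (pow_ne_zero 2 h0))).congr_deriv ?_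
  simp [U₂, B]
  field_simp
  ring

/-- A profile yields a `C²` solution on the closed interval. At `0` the derivatives `U'` and `U''`
are expressed through the quotients of `Ddiv0` and `H0`. -/
lemma exists_solution (h : Profile c a A Y) : ∃ U : ℝ → ℝ, ContDiffOn ℝ 2 U (Icc 0 1) ∧
    (∀ ρ ∈ Ioo (0 : ℝ) 1, (1 - ρ ^ 2) * deriv (deriv U) ρ + (2 / ρ - 4 * ρ) * deriv U ρ
      - 2 * U ρ + (U ρ) ^ 3 = 0) ∧ U 0 = c ∧ ∀ ρ ∈ Ioo (0 : ℝ) 1, U ρ = A ρ / ρ := by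
  obtain ⟨d, hd⟩ := h.D1
  refine ⟨glue c (a / 1) fun ρ => A ρ / ρ, ?_, ?_, glue_zero _ _ _, fun ρ hρ => glue_eq hρ⟩
  · refine contDiffOn_glue (fun ρ hρ => h.dU hρ) (fun ρ hρ => h.dU₁ hρ) ?_ h.Adiv0
      (h.A1.div id_nhdsLT one_ne_zero) (l' := 0) (m' := a ^ 3 / 2 / 1 - a / 1 ^ 2) ?_ ?_
      (l'' := (2 * c - c ^ 3) - 2 * ((2 * c - c ^ 3) / 3))
      (m'' := d / 1 - 2 * (a ^ 3 / 2) / 1 ^ 2 + 2 * a / 1 ^ 3) ?_ ?_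
    · intro ρ hρ
      have h0 := hρ.1.ne'
      have h1 := (one_sub_sq_pos hρ).ne'
      have hA : ContinuousAt A ρ := (h.dA ρ hρ).continuousAt
      have hB : ContinuousAt (B Y) ρ := (h.dB hρ).continuousAt
      refine ContinuousAt.continuousWithinAt ?_
      unfold U₂ D
      fun_prop (disch := simpa)
    · have := h.H0.mul id_nhdsGT
      rw [mul_zero] at this
      refine this.congr' (evGT fun ρ hρ => ?_)
      have h0 := hρ.1.ne'
      simp only [U₁]
      field_simp
    · exact (h.B1.div id_nhdsLT one_ne_zero).sub (h.A1.div (id_nhdsLT.pow 2) (by norm_num))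
    · refine (h.Ddiv0.sub (h.H0.const_mul 2)).congr' (evGT fun ρ hρ => ?_)
      have h0 := hρ.1.ne'
      simp only [U₂]
      field_simp
      ring
    · exact ((hd.div id_nhdsLT one_ne_zero).sub ((h.B1.const_mul 2).div (id_nhdsLT.pow 2)
        (by norm_num))).add ((h.A1.const_mul 2).div (id_nhdsLT.pow 3) (by norm_num))
  · intro ρ hρ
    have hU : ∀ x ∈ Ioo (0:ℝ) 1, deriv (glue c (a / 1) fun ρ => A ρ / ρ) x = U₁ A Y x := by
      intro x hx
      rw [(glue_eventuallyEq hx).deriv_eq, (h.dU hx).deriv]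
    have hU' : deriv (glue c (a / 1) fun ρ => A ρ / ρ) =ᶠ[𝓝 ρ] U₁ A Y :=
      mem_of_superset (Ioo_mem_nhds hρ.1 hρ.2) hU
    rw [hU'.deriv_eq, (h.dU₁ hρ).deriv, hU ρ hρ, glue_eq hρ]
    have h0 := hρ.1.ne'
    have h1 := (one_sub_sq_pos hρ).ne'
    simp only [U₁, U₂, D]
    field_simp
    ring

end Profile

lemma hasDerivAt_artanh {ρ : ℝ} (hρ : ρ ∈ Ioo (-1:ℝ) 1) :
    HasDerivAt artanh (1 / (1 - ρ ^ 2)) ρ := by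
  have h1 : 0 < 1 + ρ := by linarith [hρ.1]
  have h2 : 0 < 1 - ρ := by linarith [hρ.2]
  have h3 : (1 - ρ ^ 2) ≠ 0 := by nlinarith
  have h : HasDerivAt (fun x => 1 / 2 * log ((1 + x) / (1 - x)))
      (1 / 2 * ((1 * (1 - ρ) - (1 + ρ) * -1) / (1 - ρ) ^ 2 / ((1 + ρ) / (1 - ρ)))) ρ :=
    (((((hasDerivAt_id ρ).const_add 1).div ((hasDerivAt_id ρ).const_sub 1) h2.ne').log
      (div_pos h1 h2).ne')).const_mul (1 / 2)
  refine (h.congr_of_eventuallyEq ?_).congr_deriv ?_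
  · filter_upwards [Ioo_mem_nhds hρ.1 hρ.2] with x hx
    exact artanh_eq_half_log (Ioo_subset_Icc_self hx)
  · field_simp
    ring

lemma sinh_artanh_sq {ρ : ℝ} (hρ : ρ ∈ Ioo (0:ℝ) 1) :
    sinh (artanh ρ) ^ 2 = ρ ^ 2 / (1 - ρ ^ 2) := by
  rw [sinh_artanh ⟨by linarith [hρ.1], hρ.2⟩, div_pow, sq_sqrt (one_sub_sq_pos hρ).le]

lemma tendsto_artanh_atTop : Tendsto artanh (𝓝[<] 1) atTop := by
  refine tendsto_atTop.2 fun M => ?_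
  filter_upwards [Ioo_mem_nhdsLT (tanh_lt_one M)] with ρ hρ
  rw [← artanh_tanh M]
  exact artanh_le_artanh (neg_one_lt_tanh M) hρ.2 hρ.1.le

lemma tendsto_artanh_zero : Tendsto artanh (𝓝[>] 0) (𝓝[≥] 0) := by
  refine tendsto_nhdsWithin_iff.2 ⟨?_, Profile.evGT fun ρ hρ => (artanh_pos hρ).le⟩
  have : ContinuousAt artanh 0 := (hasDerivAt_artanh (by simp)).continuousAt
  simpa using this.tendsto.mono_left nhdsWithin_le_nhds

namespace Traj
variable {c : ℝ} {w z : ℝ → ℝ}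

/-- The tail bound on the slope is integrable, so `w` converges. -/
lemma tendsto_w (h : Traj c w z) (hz : ∀ x, 0 ≤ x → |z x| ≤ c ^ 3 * Q x) :
    ∃ a, Tendsto w atTop (𝓝 a) := by
  refine ⟨_, MeasureTheory.tendsto_limUnder_of_hasDerivAt_of_integrableOn_Ioi (a := 0)
    (fun x hx => h.derivw hx) ?_⟩
  have hi : MeasureTheory.Integrable (fun x => c ^ 3 * Q x) := by
    have := (integrable_inv_one_add_sq.const_mul (c ^ 3 * 18))
    refine this.congr (Eventually.of_forall fun x => ?_)
    simp only [Q]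
    ring
  refine hi.integrableOn.mono' ((h.contz.mono Ioi_subset_Ici_self).aestronglyMeasurable
    measurableSet_Ioi) ?_
  filter_upwards [MeasureTheory.ae_restrict_mem measurableSet_Ioi] with x hx
  exact hz x (le_of_lt hx)

/-- The substitution `ρ = tanh x`. -/
lemma exists_profile (h : Traj c w z) (hz : ∀ x, 0 ≤ x → |z x| ≤ c ^ 3 * Q x) :
    ∃ a, Profile c a (fun ρ => w (artanh ρ)) (fun ρ => z (artanh ρ)) := by
  obtain ⟨a, ha⟩ := h.tendsto_w hz
  have hz0 : Tendsto z atTop (𝓝 0) := by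
    refine squeeze_zero_norm' (a := fun x => c ^ 3 * Q x) ?_ (by simpa using tendsto_Q.const_mul _)
    filter_upwards [eventually_ge_atTop (0:ℝ)] with x hx using hz x hx
  have hd : ∀ ρ ∈ Ioo (0:ℝ) 1, HasDerivAt artanh (1 / (1 - ρ ^ 2)) ρ := fun ρ hρ =>
    hasDerivAt_artanh ⟨by linarith [hρ.1], hρ.2⟩
  refine ⟨a, ⟨fun ρ hρ => ?_, fun ρ hρ => ?_, ?_, ?_, ha.comp tendsto_artanh_atTop,
    hz0.comp tendsto_artanh_atTop⟩⟩
  · exact ((h.derivw (artanh_pos hρ)).comp ρ (hd ρ hρ)).congr_deriv (by ring)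
  · refine ((h.derivz (artanh_pos hρ)).comp ρ (hd ρ hρ)).congr_deriv ?_
    have h0 := hρ.1.ne'
    have h1 := (one_sub_sq_pos hρ).ne'
    rw [sinh_artanh_sq hρ]
    field_simp
  · have := (h.contw 0 (mem_Ici.2 le_rfl)).tendsto.comp tendsto_artanh_zero
    rwa [h.w0] at this
  · have := (h.contz 0 (mem_Ici.2 le_rfl)).tendsto.comp tendsto_artanh_zero
    rwa [h.z0] at this

end Traj

lemma encard_zeros_artanh {w : ℝ → ℝ} :
    {ρ : ℝ | ρ ∈ Ioo (0:ℝ) 1 ∧ w (artanh ρ) = 0}.encard = {x : ℝ | 0 < x ∧ w x = 0}.encard := by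
  have hinj : InjOn artanh {ρ : ℝ | ρ ∈ Ioo (0:ℝ) 1 ∧ w (artanh ρ) = 0} :=
    artanh_injOn.mono fun ρ hρ => mem_Ioo.2 ⟨by linarith [hρ.1.1], hρ.1.2⟩
  rw [← hinj.encard_image]
  congr 1
  ext x
  simp only [mem_image, mem_ofPred_eq]
  constructor
  · rintro ⟨ρ, ⟨hρ, hw⟩, rfl⟩
    exact ⟨artanh_pos hρ, hw⟩
  · rintro ⟨hx, hw⟩
    have ht : 0 < tanh x := by
      rw [tanh_eq_sinh_div_cosh]
      exact div_pos (sinh_pos_iff.2 hx) (cosh_pos x)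
    exact ⟨tanh x, ⟨⟨ht, tanh_lt_one x⟩, by rwa [artanh_tanh]⟩, artanh_tanh x⟩

end CubicWave

theorem cubic_wave_profile_nodal_existence (n : ℕ) (hn : 1 ≤ n) :
    ∃ U : ℝ → ℝ,
      ContDiffOn ℝ 2 U (Set.Icc 0 1) ∧
      (∀ ρ ∈ Set.Ioo (0 : ℝ) 1,
        (1 - ρ ^ 2) * deriv (deriv U) ρ + (2 / ρ - 4 * ρ) * deriv U ρ
          - 2 * U ρ + (U ρ) ^ 3 = 0) ∧
      0 < U 0 ∧
      {ρ : ℝ | ρ ∈ Set.Ioo (0 : ℝ) 1 ∧ U ρ = 0}.encard = n := by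
  obtain ⟨c, w, z, hc, h, hz, hlt, hge⟩ := CubicWave.exists_decaying n
  obtain ⟨a, hP⟩ := h.exists_profile hz
  obtain ⟨U, hU, hode, hU0, hUA⟩ := hP.exists_solution
  refine ⟨U, hU, hode, hU0 ▸ hc, ?_⟩
  rw [← h.encard_zeros hc.ne' hlt hge, ← CubicWave.encard_zeros_artanh]
  congr 1
  ext ρ
  simp only [Set.mem_ofPred_eq]
  refine and_congr_right fun hρ => ?_
  rw [hUA ρ hρ, div_eq_zero_iff, or_iff_left hρ.1.ne']
end

section
/- For every real number c there exist ξ > 0 and a function f : [0,ξ) → ℝ, C² on [0,ξ), with f(0) = 0 and f'(0) = c, solving f''(x) + f(x)³/(sinh x)² = 0 for all x ∈ (0,ξ); moreover this solution is unique: any two C² functions on [0,ξ') with f(0) = 0, f'(0) = c solving the equation on (0,ξ') agree on a neighborhood of 0. -/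
/-!
With `p = f'` the equation is the first-order system `f' = p`, `p' = -f³/sinh² t`, whose vector
field is singular at `t = 0`. A solution with `f 0 = 0` and `|p| ≤ M` satisfies `|f t| ≤ M|t|`, so
the vector field matters only in the cone `|y| ≤ M|t|`. Replacing `y` by its projection to this cone
gives a field whose forcing is at most `M³|t|` (`forcing_abs_le`), jointly continuous even at `t = 0`
(`forcing_continuous`), and Lipschitz in the state uniformly in time (`field_lipschitz`), because
`|sinh t| ≥ |t|`. The classical theory then applies with initial time `0`.

Existence: Picard–Lindelöf for the modified field with `M = |c| + 1` yields `(f, p)` near `0`; by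
continuity `|p| ≤ M` for short times, so `f` stays in the cone and the modification is invisible.

Uniqueness: two `C²` solutions have derivatives bounded by a common `M` on some `[0, δ]`, so both
are trajectories of the same modified field (`regular_solution_trajectory`). At `t = 0` this requires
a one-sided derivative of `p`, which exists since `p'` tends to `0` there. Grönwall uniqueness
concludes.
-/

open Set Filter Topology
open scoped NNReal

/-- The projection of `y` to the interval `[-r, r]`, for `0 ≤ r`. -/
noncomputable def clip (r y : ℝ) : ℝ := max (-r) (min r y)

lemma clip_abs_le {r : ℝ} (hr : 0 ≤ r) (y : ℝ) : |clip r y| ≤ r :=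
  abs_le.2 ⟨le_max_left _ _, max_le (by linarith) (min_le_left _ _)⟩

lemma clip_eq {r y : ℝ} (h : |y| ≤ r) : clip r y = y := by
  obtain ⟨h1, h2⟩ := abs_le.1 h
  rw [clip, min_eq_right h2, max_eq_right h1]

lemma clip_sub_le (r y z : ℝ) : |clip r y - clip r z| ≤ |y - z| := by
  unfold clip
  refine (abs_max_sub_max_le_max _ _ _ _).trans ?_
  rw [sub_self, abs_zero, max_eq_right (abs_nonneg _)]
  refine (abs_min_sub_min_le_max _ _ _ _).trans ?_
  rw [sub_self, abs_zero, max_eq_right (abs_nonneg _)]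

/-- The right-hand side `-y³/sinh² t` with `y` projected to `[-M|t|, M|t|]`. At `t = 0` the
convention `x / 0 = 0` produces the value `0`, which is the continuous extension. -/
noncomputable def forcing (M t y : ℝ) : ℝ := -((clip (M * |t|) y) ^ 3 / (Real.sinh t) ^ 2)

/-- The first-order system `(y, p)' = (p, forcing M t y)`. -/
noncomputable def field (M t : ℝ) (z : ℝ × ℝ) : ℝ × ℝ := (z.2, forcing M t z.1)

lemma sq_le_sinh_sq (t : ℝ) : t ^ 2 ≤ Real.sinh t ^ 2 := by
  rw [sq_le_sq, Real.abs_sinh]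
  exact Real.self_le_sinh_iff.2 (abs_nonneg t)

lemma forcing_abs_le {M : ℝ} (hM : 0 ≤ M) (t y : ℝ) : |forcing M t y| ≤ M ^ 3 * |t| := by
  rcases eq_or_ne t 0 with rfl | ht
  · simp [forcing]
  have ht2 : 0 < t ^ 2 := by positivity
  have hs : 0 < Real.sinh t ^ 2 := ht2.trans_le (sq_le_sinh_sq t)
  rw [forcing, abs_neg, abs_div, abs_pow, abs_of_pos hs, div_le_iff₀ hs]
  calc |clip (M * |t|) y| ^ 3 ≤ (M * |t|) ^ 3 := by
        gcongr; exact clip_abs_le (by positivity) y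
    _ = M ^ 3 * |t| * t ^ 2 := by rw [← sq_abs t]; ring
    _ ≤ _ := mul_le_mul_of_nonneg_left (sq_le_sinh_sq t) (by positivity)

lemma forcing_sub_le {M : ℝ} (hM : 0 ≤ M) (t y z : ℝ) :
    |forcing M t y - forcing M t z| ≤ 3 * M ^ 2 * |y - z| := by
  rcases eq_or_ne t 0 with rfl | ht
  · simp only [forcing, Real.sinh_zero]; norm_num; positivity
  have ht2 : 0 < t ^ 2 := by positivity
  have hs : 0 < Real.sinh t ^ 2 := ht2.trans_le (sq_le_sinh_sq t)
  have hr : 0 ≤ M * |t| := by positivity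
  set a := clip (M * |t|) y with ha
  set b := clip (M * |t|) z with hb
  have h1 : |a| ≤ M * |t| := clip_abs_le hr y
  have h2 : |b| ≤ M * |t| := clip_abs_le hr z
  have h3 : |a - b| ≤ |y - z| := clip_sub_le _ _ _
  have h4 : |a ^ 2 + a * b + b ^ 2| ≤ 3 * (M * |t|) ^ 2 := by
    have e1 : |a| ^ 2 ≤ (M * |t|) ^ 2 := by gcongr
    have e2 : |b| ^ 2 ≤ (M * |t|) ^ 2 := by gcongr
    have e3 : |a| * |b| ≤ (M * |t|) * (M * |t|) := by gcongr
    calc |a ^ 2 + a * b + b ^ 2| ≤ |a ^ 2| + |a * b| + |b ^ 2| := abs_add_three _ _ _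
      _ = |a| ^ 2 + |a| * |b| + |b| ^ 2 := by rw [abs_pow, abs_pow, abs_mul]
      _ ≤ _ := by nlinarith
  have h5 : forcing M t y - forcing M t z
      = -((a - b) * (a ^ 2 + a * b + b ^ 2) / Real.sinh t ^ 2) := by
    simp only [forcing, ← ha, ← hb]; ring
  rw [h5, abs_neg, abs_div, abs_of_pos hs, abs_mul, div_le_iff₀ hs]
  calc |a - b| * |a ^ 2 + a * b + b ^ 2| ≤ |y - z| * (3 * (M * |t|) ^ 2) := by gcongr
    _ = 3 * M ^ 2 * |y - z| * t ^ 2 := by rw [mul_pow, sq_abs]; ring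
    _ ≤ _ := mul_le_mul_of_nonneg_left (sq_le_sinh_sq t) (by positivity)

lemma forcing_continuous {M : ℝ} (hM : 0 ≤ M) :
    Continuous fun z : ℝ × ℝ => forcing M z.1 z.2 := by
  rw [continuous_iff_continuousAt]
  rintro ⟨t, y⟩
  rcases eq_or_ne t 0 with rfl | ht
  · have h0 : forcing M 0 y = 0 := by simp [forcing]
    rw [ContinuousAt, h0]
    refine squeeze_zero_norm (a := fun z : ℝ × ℝ => M ^ 3 * |z.1|)
      (fun z => forcing_abs_le hM _ _) ?_
    have : Continuous fun z : ℝ × ℝ => M ^ 3 * |z.1| := by fun_prop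
    simpa using this.tendsto (0, y)
  · unfold forcing clip
    refine ContinuousAt.neg (ContinuousAt.div (by fun_prop) (by fun_prop) ?_)
    exact pow_ne_zero 2 (by simpa using ht)

/-- The Lipschitz constant of `field` in the state variable (for the sup norm). -/
noncomputable def lipConst (M : ℝ) : ℝ≥0 := max 1 (Real.toNNReal (3 * M ^ 2))

lemma field_lipschitz {M : ℝ} (hM : 0 ≤ M) (t : ℝ) : LipschitzWith (lipConst M) (field M t) := by
  refine LipschitzWith.prodMk LipschitzWith.prod_snd ?_
  rw [← mul_one (Real.toNNReal _)]
  refine LipschitzWith.comp (f := forcing M t) (g := Prod.fst) ?_ LipschitzWith.prod_fst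
  refine LipschitzWith.of_dist_le_mul fun y z => ?_
  rw [Real.dist_eq, Real.dist_eq, Real.coe_toNNReal _ (by positivity)]
  exact forcing_sub_le hM t y z

lemma forcing_eq {M t y : ℝ} (h : |y| ≤ M * |t|) : forcing M t y = -(y ^ 3 / Real.sinh t ^ 2) := by
  rw [forcing, clip_eq h]

lemma abs_le_of_deriv_bound {M δ : ℝ} {f p : ℝ → ℝ} (h0 : f 0 = 0)
    (hf : ∀ t ∈ Icc 0 δ, HasDerivWithinAt f (p t) (Ici t) t) (hc : ContinuousOn f (Icc 0 δ))
    (hb : ∀ t ∈ Icc 0 δ, |p t| ≤ M) : ∀ t ∈ Icc 0 δ, |f t| ≤ M * |t| := by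
  intro t ht
  have := norm_image_sub_le_of_norm_deriv_right_le_segment hc
    (fun x hx => hf x (Ico_subset_Icc_self hx)) (fun x hx => hb x (Ico_subset_Icc_self hx)) t ht
  simpa [h0, abs_of_nonneg ht.1] using this

lemma exists_solution (c : ℝ) : ∃ ξ : ℝ, 0 < ξ ∧ ∃ f : ℝ → ℝ,
      ContDiffOn ℝ 2 f (Set.Ico 0 ξ) ∧
      f 0 = 0 ∧
      derivWithin f (Set.Ico 0 ξ) 0 = c ∧
      ∀ x ∈ Set.Ioo (0 : ℝ) ξ,
        deriv (deriv f) x + (f x) ^ 3 / (Real.sinh x) ^ 2 = 0 := by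
  set M : ℝ := |c| + 1 with hMdef
  have hM : 0 ≤ M := by positivity
  set L : ℝ := M + M ^ 3 with hL
  have hL0 : 0 ≤ L := by positivity
  set ε : ℝ := 1 / (L + 1) with hε
  have hε0 : 0 < ε := by positivity
  have hε1 : ε ≤ 1 := by rw [hε, div_le_one (by positivity)]; linarith
  have hLε : L * ε ≤ 1 := by
    rw [hε, mul_one_div, div_le_one (by positivity)]; linarith
  have hPL : IsPicardLindelof (field M) (tmin := -ε) (tmax := ε)
      ⟨0, by constructor <;> linarith⟩ ((0, c) : ℝ × ℝ) 1 0 (Real.toNNReal L) (lipConst M) := by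
    refine ⟨fun t _ => (field_lipschitz hM t).lipschitzOnWith, fun z _ => ?_, ?_, ?_⟩
    · have h := (forcing_continuous hM).comp (f := fun t : ℝ => (t, z.1)) (by fun_prop)
      exact (continuous_const.prodMk h).continuousOn
    · intro t ht z hz
      rw [Real.coe_toNNReal _ hL0, Prod.norm_def]
      have ht1 : |t| ≤ 1 := (abs_le.2 ht).trans hε1
      have hz2 : |z.2 - c| ≤ 1 := by
        have := (norm_snd_le (z - (0, c))).trans (mem_closedBall_iff_norm.1 hz)
        simpa using this
      have hz3 : |z.2| ≤ M := by
        have := abs_sub_abs_le_abs_sub z.2 c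
        linarith
      have hfo : |forcing M t z.1| ≤ M ^ 3 :=
        (forcing_abs_le hM t z.1).trans (mul_le_of_le_one_right (by positivity) ht1)
      refine max_le ?_ ?_
      · exact hz3.trans (by rw [hL]; linarith [pow_nonneg hM 3])
      · exact hfo.trans (by rw [hL]; linarith)
    · rw [Real.coe_toNNReal _ hL0]
      simpa using hLε
  obtain ⟨α, hα0, hα⟩ := hPL.exists_eq_forall_mem_Icc_hasDerivWithinAt₀
  have hα0 : α 0 = (0, c) := hα0
  have hD : ∀ t ∈ Ioo (-ε) ε, HasDerivAt α (field M t (α t)) t := fun t ht =>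
    (hα t (Ioo_subset_Icc_self ht)).hasDerivAt (Icc_mem_nhds ht.1 ht.2)
  set f : ℝ → ℝ := fun t => (α t).1 with hfdef
  set p : ℝ → ℝ := fun t => (α t).2 with hpdef
  have hf : ∀ t ∈ Ioo (-ε) ε, HasDerivAt f (p t) t := fun t ht => (hD t ht).fst
  have hp : ∀ t ∈ Ioo (-ε) ε, HasDerivAt p (forcing M t (f t)) t := fun t ht => (hD t ht).snd
  have hf0 : f 0 = 0 := by simp [hfdef, hα0]
  have hp0 : p 0 = c := by simp [hpdef, hα0]
  have h0mem : (0 : ℝ) ∈ Ioo (-ε) ε := ⟨by linarith, hε0⟩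
  -- The second derivative is the composite of `forcing` with a continuous curve.
  have hfC : ContDiffOn ℝ 2 f (Ioo (-ε) ε) := by
    have hpC : ContDiffOn ℝ 1 p (Ioo (-ε) ε) := by
      rw [show (1 : WithTop ℕ∞) = 0 + 1 by norm_num, contDiffOn_succ_iff_deriv_of_isOpen isOpen_Ioo]
      refine ⟨fun t ht => (hp t ht).differentiableAt.differentiableWithinAt, by simp, ?_⟩
      rw [contDiffOn_zero]
      have : ContinuousOn (fun t => forcing M t (f t)) (Ioo (-ε) ε) :=
        (forcing_continuous hM).comp_continuousOn (f := fun t => (t, f t))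
          (continuousOn_id.prodMk fun t ht => (hf t ht).continuousAt.continuousWithinAt)
      exact this.congr fun t ht => (hp t ht).deriv
    rw [show (2 : WithTop ℕ∞) = 1 + 1 by norm_num, contDiffOn_succ_iff_deriv_of_isOpen isOpen_Ioo]
    exact ⟨fun t ht => (hf t ht).differentiableAt.differentiableWithinAt, by simp,
      hpC.congr fun t ht => (hf t ht).deriv⟩
  have hev : ∀ᶠ t in 𝓝 (0 : ℝ), |p t| < M := by
    refine ((hp 0 h0mem).continuousAt.abs).eventually_lt_const ?_
    change |p 0| < M
    rw [hp0, hMdef]; linarith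
  obtain ⟨η, hη, hηb⟩ := Metric.eventually_nhds_iff.1 hev
  set ξ := min η ε with hξ
  have hξ0 : 0 < ξ := lt_min hη hε0
  have hξε : ξ ≤ ε := min_le_right _ _
  refine ⟨ξ, hξ0, f, hfC.mono fun t ht => ⟨by linarith [ht.1], ht.2.trans_le hξε⟩, hf0, ?_, ?_⟩
  · rw [← hp0]
    exact (hf 0 h0mem).hasDerivWithinAt.derivWithin (uniqueDiffOn_Ico 0 ξ 0 ⟨le_rfl, hξ0⟩)
  · intro x hx
    have hsub : ∀ t ∈ Icc 0 x, t ∈ Ioo (-ε) ε := fun t ht =>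
      ⟨by linarith [ht.1], by linarith [ht.2, hx.2]⟩
    have hcone : |f x| ≤ M * |x| :=
      abs_le_of_deriv_bound hf0 (fun t ht => (hf t (hsub t ht)).hasDerivWithinAt)
        (fun t ht => (hf t (hsub t ht)).continuousAt.continuousWithinAt)
        (fun t ht => (hηb (by
          rw [Real.dist_eq, sub_zero, abs_of_nonneg ht.1]
          exact (ht.2.trans_lt hx.2).trans_le (min_le_left _ _))).le)
        x ⟨hx.1.le, le_rfl⟩
    have hxm := hsub x ⟨hx.1.le, le_rfl⟩
    have hEq : deriv f =ᶠ[𝓝 x] p := by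
      filter_upwards [Ioo_mem_nhds hxm.1 hxm.2] with t ht using (hf t ht).deriv
    rw [hEq.deriv_eq, (hp x hxm).deriv, forcing_eq hcone]
    ring

/-- The derivative of a `C²` solution on `[0, ξ)`, one-sided at `0`, is continuous up to `0` and
satisfies the second equation of the first-order system on `(0, ξ)`. -/
lemma regular_solution_derivative {ξ : ℝ} {f : ℝ → ℝ}
    (hfC : ContDiffOn ℝ 2 f (Ico 0 ξ))
    (hode : ∀ x ∈ Ioo (0 : ℝ) ξ, deriv (deriv f) x + (f x) ^ 3 / (Real.sinh x) ^ 2 = 0) :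
    ContinuousOn (derivWithin f (Ico 0 ξ)) (Ico 0 ξ) ∧
    (∀ t ∈ Ico 0 ξ, HasDerivWithinAt f (derivWithin f (Ico 0 ξ) t) (Ici t) t) ∧
    (∀ t ∈ Ioo 0 ξ, HasDerivAt (derivWithin f (Ico 0 ξ)) (-(f t ^ 3 / Real.sinh t ^ 2)) t) := by
  have hu := uniqueDiffOn_Ico 0 ξ
  rw [show (2 : WithTop ℕ∞) = 1 + 1 by norm_num, contDiffOn_succ_iff_derivWithin hu] at hfC
  obtain ⟨hd, -, hpC⟩ := hfC
  refine ⟨hpC.continuousOn, fun t ht => ?_, fun t ht => ?_⟩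
  · exact (hd t ht).hasDerivWithinAt.mono_of_mem_nhdsWithin (Ico_mem_nhdsGE_of_mem ht)
  · have hpd : DifferentiableAt ℝ (derivWithin f (Ico 0 ξ)) t :=
      (hpC.differentiableOn one_ne_zero t ⟨ht.1.le, ht.2⟩).differentiableAt
        (Ico_mem_nhds ht.1 ht.2)
    have hEq : deriv f =ᶠ[𝓝 t] derivWithin f (Ico 0 ξ) := by
      filter_upwards [Ioo_mem_nhds ht.1 ht.2] with s hs
      exact (derivWithin_of_mem_nhds (Ico_mem_nhds hs.1 hs.2)).symm
    have h := hode t ht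
    rw [hEq.deriv_eq] at h
    rw [← eq_neg_of_add_eq_zero_left h]
    exact hpd.hasDerivAt

/-- As long as `|f'| ≤ M`, a regular solution is a trajectory of the modified field, including at
the singular time `0`. -/
lemma regular_solution_trajectory {M δ : ℝ} (hM : 0 ≤ M) {f p : ℝ → ℝ} (h0 : f 0 = 0)
    (hpc : ContinuousOn p (Icc 0 δ))
    (hf : ∀ t ∈ Icc 0 δ, HasDerivWithinAt f (p t) (Ici t) t) (hc : ContinuousOn f (Icc 0 δ))
    (hp : ∀ t ∈ Ioo 0 δ, HasDerivAt p (-(f t ^ 3 / Real.sinh t ^ 2)) t)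
    (hb : ∀ t ∈ Icc 0 δ, |p t| ≤ M) :
    ∀ t ∈ Ico 0 δ, HasDerivWithinAt (fun s => (f s, p s)) (field M t (f t, p t)) (Ici t) t := by
  have hcone := abs_le_of_deriv_bound h0 hf hc hb
  intro t ht
  refine (hf t (Ico_subset_Icc_self ht)).prodMk ?_
  have hp' : ∀ s ∈ Ioo 0 δ, HasDerivAt p (forcing M s (f s)) s := fun s hs => by
    rw [forcing_eq (hcone s (Ioo_subset_Icc_self hs))]; exact hp s hs
  rcases eq_or_lt_of_le ht.1 with rfl | htpos
  · have hδ : 0 < δ := ht.2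
    have hz : forcing M 0 (f 0) = 0 := by simp [forcing]
    have hmem : Ioo 0 δ ∈ 𝓝[>] (0 : ℝ) := Ioo_mem_nhdsGT hδ
    refine hasDerivWithinAt_Ici_of_tendsto_deriv (s := Ioo 0 δ)
      (fun s hs => (hp' s hs).differentiableAt.differentiableWithinAt)
      ((hpc 0 ⟨le_rfl, hδ.le⟩).mono Ioo_subset_Icc_self) hmem ?_
    simp only [hz]
    have hlim : Tendsto (fun s : ℝ => M ^ 3 * |s|) (𝓝[>] 0) (𝓝 0) := by
      have : Continuous fun s : ℝ => M ^ 3 * |s| := by fun_prop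
      simpa using (this.tendsto 0).mono_left nhdsWithin_le_nhds
    refine squeeze_zero_norm' ?_ hlim
    filter_upwards [hmem] with s hs
    rw [(hp' s hs).deriv]
    exact forcing_abs_le hM _ _
  · exact (hp' t ⟨htpos, ht.2⟩).hasDerivWithinAt


/-- Local existence and uniqueness for the ODE `f'' + f³/sinh²x = 0` with the regular
boundary condition `f(0) = 0`, `f'(0) = c` at the singular point `x = 0`. -/
theorem cubic_wave_local_existence_uniqueness (c : ℝ) :
    (∃ ξ : ℝ, 0 < ξ ∧ ∃ f : ℝ → ℝ,
      ContDiffOn ℝ 2 f (Set.Ico 0 ξ) ∧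
      f 0 = 0 ∧
      derivWithin f (Set.Ico 0 ξ) 0 = c ∧
      ∀ x ∈ Set.Ioo (0 : ℝ) ξ,
        deriv (deriv f) x + (f x) ^ 3 / (Real.sinh x) ^ 2 = 0) ∧
    (∀ ξ' : ℝ, 0 < ξ' → ∀ f g : ℝ → ℝ,
      ContDiffOn ℝ 2 f (Set.Ico 0 ξ') →
      f 0 = 0 →
      derivWithin f (Set.Ico 0 ξ') 0 = c →
      (∀ x ∈ Set.Ioo (0 : ℝ) ξ',
        deriv (deriv f) x + (f x) ^ 3 / (Real.sinh x) ^ 2 = 0) →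
      ContDiffOn ℝ 2 g (Set.Ico 0 ξ') →
      g 0 = 0 →
      derivWithin g (Set.Ico 0 ξ') 0 = c →
      (∀ x ∈ Set.Ioo (0 : ℝ) ξ',
        deriv (deriv g) x + (g x) ^ 3 / (Real.sinh x) ^ 2 = 0) →
      ∃ δ : ℝ, 0 < δ ∧ ∀ x ∈ Set.Ico (0 : ℝ) δ, f x = g x) := by
  refine ⟨exists_solution c, ?_⟩
  intro ξ hξ f g hfC hf0 hfc hfode hgC hg0 hgc hgode
  obtain ⟨hpc, hf, hp⟩ := regular_solution_derivative hfC hfode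
  obtain ⟨hqc, hg, hq⟩ := regular_solution_derivative hgC hgode
  set p := derivWithin f (Ico 0 ξ)
  set q := derivWithin g (Ico 0 ξ)
  have hsub : Icc 0 (ξ / 2) ⊆ Ico 0 ξ := fun t ht => ⟨ht.1, by linarith [ht.2]⟩
  have hsub' : Ioo 0 (ξ / 2) ⊆ Ioo 0 ξ := fun t ht => ⟨ht.1, by linarith [ht.2]⟩
  obtain ⟨A, hA⟩ := isCompact_Icc.exists_bound_of_continuousOn (hpc.mono hsub)
  obtain ⟨B, hB⟩ := isCompact_Icc.exists_bound_of_continuousOn (hqc.mono hsub)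
  have hM : 0 ≤ max (max A B) 0 := le_max_right _ _
  have hA' : ∀ t ∈ Icc 0 (ξ / 2), |p t| ≤ max (max A B) 0 := fun t ht =>
    (hA t ht).trans ((le_max_left _ _).trans (le_max_left _ _))
  have hB' : ∀ t ∈ Icc 0 (ξ / 2), |q t| ≤ max (max A B) 0 := fun t ht =>
    (hB t ht).trans ((le_max_right _ _).trans (le_max_left _ _))
  have hfcont := hfC.continuousOn.mono hsub
  have hgcont := hgC.continuousOn.mono hsub
  have key := ODE_solution_unique (fun t => field_lipschitz hM t)
    (hfcont.prodMk (hpc.mono hsub))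
    (regular_solution_trajectory hM hf0 (hpc.mono hsub) (fun t ht => hf t (hsub ht)) hfcont
      (fun t ht => hp t (hsub' ht)) hA')
    (hgcont.prodMk (hqc.mono hsub))
    (regular_solution_trajectory hM hg0 (hqc.mono hsub) (fun t ht => hg t (hsub ht)) hgcont
      (fun t ht => hq t (hsub' ht)) hB')
    (by simp only [hf0, hg0, hfc, hgc])
  exact ⟨ξ / 2, by positivity, fun x hx => congrArg Prod.fst (key (Ico_subset_Icc_self hx))⟩
end

section
/- Let I ⊂ (0,∞) be an open interval and let f : I → ℝ be C² and solve f''(x) + f(x)³/(sinh x)² = 0 on I. Then the function G(x) = 2 f'(x)² + f(x)⁴/(sinh x)² is differentiable on I with G'(x) = −2 coth(x) · f(x)⁴/(sinh x)²; in particular G'(x) ≤ 0, so G is nonincreasing on I. -/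
/-! Differentiating, `G' = 4 f' (f'' + f³/sinh²) - 2 coth · f⁴/sinh²`, and the bracket vanishes by the
equation. Since `sinh` and `cosh` are positive on `(0, ∞)`, what is left is nonpositive, and `G` is
antitone on the convex set `(a, b)` by the mean value theorem. -/

/-- Along any `C²` solution of `f'' + f³/sinh²x = 0` on an open interval `I ⊆ (0,∞)`,
the Lyapunov function `G = 2 f'² + f⁴/sinh²x` satisfies
`G' = -2 coth x · f⁴/sinh²x ≤ 0`, hence `G` is nonincreasing. -/
theorem cubic_wave_lyapunov (a b : ℝ) (ha : 0 ≤ a) (f : ℝ → ℝ)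
    (hf : ContDiffOn ℝ 2 f (Set.Ioo a b))
    (heq : ∀ x ∈ Set.Ioo a b,
      deriv (deriv f) x + (f x) ^ 3 / (Real.sinh x) ^ 2 = 0) :
    (∀ x ∈ Set.Ioo a b,
      HasDerivAt (fun y => 2 * (deriv f y) ^ 2 + (f y) ^ 4 / (Real.sinh y) ^ 2)
        (-2 * (Real.cosh x / Real.sinh x) * ((f x) ^ 4 / (Real.sinh x) ^ 2)) x) ∧
    (∀ x ∈ Set.Ioo a b,
      -2 * (Real.cosh x / Real.sinh x) * ((f x) ^ 4 / (Real.sinh x) ^ 2) ≤ 0) ∧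
    AntitoneOn (fun y => 2 * (deriv f y) ^ 2 + (f y) ^ 4 / (Real.sinh y) ^ 2)
      (Set.Ioo a b) := by
  have hd : ∀ x ∈ Set.Ioo a b,
      HasDerivAt (fun y => 2 * (deriv f y) ^ 2 + (f y) ^ 4 / (Real.sinh y) ^ 2)
        (-2 * (Real.cosh x / Real.sinh x) * ((f x) ^ 4 / (Real.sinh x) ^ 2)) x := by
    intro x hx
    have hs : 0 < Real.sinh x := Real.sinh_pos_iff.2 (ha.trans_lt hx.1)
    have hmem : Set.Ioo a b ∈ nhds x := isOpen_Ioo.mem_nhds hx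
    have h1 : HasDerivAt f (deriv f x) x :=
      ((hf.contDiffAt hmem).differentiableAt (by norm_num)).hasDerivAt
    have hf' : ContDiffOn ℝ 1 (deriv f) (Set.Ioo a b) :=
      hf.deriv_of_isOpen isOpen_Ioo (by norm_num)
    have h2 : HasDerivAt (deriv f) (deriv (deriv f) x) x :=
      ((hf'.contDiffAt hmem).differentiableAt (by norm_num)).hasDerivAt
    have h3 : deriv (deriv f) x = -((f x) ^ 3 / (Real.sinh x) ^ 2) :=
      eq_neg_of_add_eq_zero_left (heq x hx)
    rw [h3] at h2
    refine HasDerivAt.congr_deriv (((h2.pow 2).const_mul 2).add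
      ((h1.pow 4).div ((Real.hasDerivAt_sinh x).pow 2) (pow_ne_zero 2 hs.ne'))) ?_
    simp only [Pi.pow_apply]
    field_simp
    push_cast
    ring
  have hn : ∀ x ∈ Set.Ioo a b,
      -2 * (Real.cosh x / Real.sinh x) * ((f x) ^ 4 / (Real.sinh x) ^ 2) ≤ 0 := by
    intro x hx
    have hs : 0 < Real.sinh x := Real.sinh_pos_iff.2 (ha.trans_lt hx.1)
    have hc := Real.cosh_pos x
    have : 0 ≤ (Real.cosh x / Real.sinh x) * ((f x) ^ 4 / (Real.sinh x) ^ 2) := by positivity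
    linarith
  refine ⟨hd, hn, antitoneOn_of_deriv_nonpos (convex_Ioo a b)
    (fun x hx => (hd x hx).continuousAt.continuousWithinAt) ?_ ?_⟩
  · rw [interior_Ioo]
    exact fun x hx => (hd x hx).differentiableAt.differentiableWithinAt
  · rw [interior_Ioo]
    intro x hx
    rw [(hd x hx).deriv]
    exact hn x hx
end

section
/- Let x₀ > 0 and let f : [x₀,∞) → ℝ be C² and solve f''(x) + f(x)³/(sinh x)² = 0 for all x ≥ x₀. Then the limits B = lim_{x→∞} (f(x) − x·f'(x)) and D = lim_{x→∞} f'(x) both exist and are finite, and f(x) − (B + D·x) → 0 as x → ∞. -/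
/-!
The energy `f'² / 2 + f⁴ / (4 sinh²)` is nonincreasing on `[x₀, ∞)`, because its derivative along
the equation is `-f⁴ cosh / (2 sinh³)`. Hence `f'` is bounded (`deriv_bounded`), so `f` grows at
most linearly, and since `sinh x` is bounded below by a multiple of `exp x`, the function
`(1 + x) |f|³ / sinh²` is `O(exp (-x))` (`exp_decay`). This dominates the derivatives of both `d = f'`
and `b = f - x f'`, so both converge, at the rate `exp (-x)` (`exists_limit_of_exp_bound`).
Finally `f - (B + D x) = (b - B) + x (d - D)`, and the rate of convergence of `d` beats the
factor `x`.
-/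

open Set Filter Topology

/-- A function whose derivative is bounded by `K exp (-x)` has a limit, approached at the rate
`K exp (-x)`: the functions `g - K exp (-x)` and `g + K exp (-x)` are respectively increasing and
decreasing, and they squeeze `g`. -/
lemma exists_limit_of_exp_bound {x₀ K : ℝ} {g g' : ℝ → ℝ} (hK : 0 ≤ K)
    (hg : ∀ x ∈ Ici x₀, HasDerivWithinAt g (g' x) (Ici x₀) x)
    (hb : ∀ x ∈ Ici x₀, |g' x| ≤ K * Real.exp (-x)) :
    ∃ L : ℝ, Tendsto g atTop (𝓝 L) ∧ ∀ x ∈ Ici x₀, |g x - L| ≤ K * Real.exp (-x) := by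
  have hexp : ∀ x, HasDerivAt (fun y : ℝ => K * Real.exp (-y)) (-(K * Real.exp (-x))) x := by
    intro x
    have := ((Real.hasDerivAt_exp (-x)).comp x (hasDerivAt_neg x)).const_mul K
    exact this.congr_deriv (by ring)
  have hlo : MonotoneOn (fun x => g x - K * Real.exp (-x)) (Ici x₀) := by
    have hd : ∀ x ∈ Ici x₀, HasDerivWithinAt (fun x => g x - K * Real.exp (-x))
        (g' x - -(K * Real.exp (-x))) (Ici x₀) x :=
      fun x hx => (hg x hx).sub (hexp x).hasDerivWithinAt
    refine monotoneOn_of_hasDerivWithinAt_nonneg (convex_Ici x₀)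
      (fun x hx => (hd x hx).continuousWithinAt)
      (fun x hx => (hd x (interior_subset hx)).mono interior_subset) ?_
    intro x hx
    have := (abs_le.1 (hb x (interior_subset hx))).1
    linarith
  have hhi : AntitoneOn (fun x => g x + K * Real.exp (-x)) (Ici x₀) := by
    have hd : ∀ x ∈ Ici x₀, HasDerivWithinAt (fun x => g x + K * Real.exp (-x))
        (g' x + -(K * Real.exp (-x))) (Ici x₀) x :=
      fun x hx => (hg x hx).add (hexp x).hasDerivWithinAt
    refine antitoneOn_of_hasDerivWithinAt_nonpos (convex_Ici x₀)
      (fun x hx => (hd x hx).continuousWithinAt)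
      (fun x hx => (hd x (interior_subset hx)).mono interior_subset) ?_
    intro x hx
    have := (abs_le.1 (hb x (interior_subset hx))).2
    linarith
  have hpos : ∀ x, 0 ≤ K * Real.exp (-x) := fun x => mul_nonneg hK (Real.exp_pos _).le
  -- every value of the lower function is below every value of the upper one
  have hcross : ∀ x ∈ Ici x₀, ∀ y ∈ Ici x₀, g x - K * Real.exp (-x) ≤ g y + K * Real.exp (-y) := by
    intro x hx y hy
    rcases le_total x y with h | h
    · have := hlo hx hy h
      have := hpos y
      dsimp only at *
      linarith
    · have := hhi hy hx h
      have := hpos x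
      dsimp only at *
      linarith
  have hne : ((fun x => g x - K * Real.exp (-x)) '' Ici x₀).Nonempty := nonempty_Ici.image _
  have hub : ∀ y ∈ Ici x₀, g y + K * Real.exp (-y) ∈
      upperBounds ((fun x => g x - K * Real.exp (-x)) '' Ici x₀) := by
    rintro y hy _ ⟨x, hx, rfl⟩
    exact hcross x hx y hy
  have hrate : ∀ x ∈ Ici x₀,
      |g x - sSup ((fun x => g x - K * Real.exp (-x)) '' Ici x₀)| ≤ K * Real.exp (-x) := by
    intro x hx
    have h1 := le_csSup ⟨_, hub x hx⟩ (mem_image_of_mem (fun x => g x - K * Real.exp (-x)) hx)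
    have h2 := csSup_le hne (hub x hx)
    rw [abs_le]
    constructor <;> linarith
  refine ⟨_, ?_, hrate⟩
  have h0 : Tendsto (fun x : ℝ => K * Real.exp (-x)) atTop (𝓝 0) := by
    simpa using Real.tendsto_exp_neg_atTop_nhds_zero.const_mul K
  rw [tendsto_iff_norm_sub_tendsto_zero]
  refine squeeze_zero' (Eventually.of_forall fun _ => norm_nonneg _) ?_ h0
  filter_upwards [eventually_ge_atTop x₀] with x hx
  exact hrate x hx

/-- Monotonicity of the energy `h² / 2 + f⁴ / (4 sinh²)` bounds the derivative `h` of a solution. -/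
lemma deriv_bounded {x₀ : ℝ} (hx₀ : 0 < x₀) {f h : ℝ → ℝ}
    (hf : ∀ x ∈ Ici x₀, HasDerivWithinAt f (h x) (Ici x₀) x)
    (hh : ∀ x ∈ Ici x₀, HasDerivWithinAt h (-((f x) ^ 3 / (Real.sinh x) ^ 2)) (Ici x₀) x) :
    ∃ M, 0 ≤ M ∧ ∀ x ∈ Ici x₀, |h x| ≤ M := by
  have hs : ∀ x ∈ Ici x₀, 0 < Real.sinh x :=
    fun x hx => Real.sinh_pos_iff.2 (hx₀.trans_le hx)
  have hd : ∀ x ∈ Ici x₀,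
      HasDerivWithinAt (fun x => (h x) ^ 2 / 2 + (f x) ^ 4 / (4 * (Real.sinh x) ^ 2))
        (-((f x) ^ 4 * Real.cosh x / (2 * (Real.sinh x) ^ 3))) (Ici x₀) x := by
    intro x hx
    have hsx := (hs x hx).ne'
    have h1 := ((hh x hx).pow 2).div_const 2
    have h2 := ((hf x hx).pow 4).div
      ((((Real.hasDerivAt_sinh x).hasDerivWithinAt (s := Ici x₀)).pow 2).const_mul 4)
      (mul_ne_zero four_ne_zero (pow_ne_zero 2 hsx))
    refine (h1.add h2).congr_deriv ?_
    simp only [Pi.pow_apply]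
    push_cast
    field_simp
    ring
  have hanti : AntitoneOn (fun x => (h x) ^ 2 / 2 + (f x) ^ 4 / (4 * (Real.sinh x) ^ 2))
      (Ici x₀) := by
    refine antitoneOn_of_hasDerivWithinAt_nonpos (convex_Ici x₀)
      (fun x hx => (hd x hx).continuousWithinAt)
      (fun x hx => (hd x (interior_subset hx)).mono interior_subset) ?_
    intro x hx
    have := hs x (interior_subset hx)
    have := Real.cosh_pos x
    rw [neg_nonpos]
    positivity
  refine ⟨Real.sqrt (2 * ((h x₀) ^ 2 / 2 + (f x₀) ^ 4 / (4 * (Real.sinh x₀) ^ 2))),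
    Real.sqrt_nonneg _, fun x hx => Real.abs_le_sqrt ?_⟩
  have h1 := hanti self_mem_Ici hx hx
  have h2 : 0 ≤ (f x) ^ 4 / (4 * (Real.sinh x) ^ 2) := by positivity
  dsimp only at h1
  linarith

/-- The nonlinearity of an at most linearly growing function decays exponentially, even after
multiplication by `1 + x`. -/
lemma exp_decay {x₀ A : ℝ} (hx₀ : 0 < x₀) (hA : 0 ≤ A) {f : ℝ → ℝ}
    (hf : ∀ x ∈ Ici x₀, |f x| ≤ A * (1 + x)) :
    ∃ K, 0 ≤ K ∧ ∀ x ∈ Ici x₀,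
      (1 + x) * |(f x) ^ 3 / (Real.sinh x) ^ 2| ≤ K * Real.exp (-x) := by
  obtain ⟨c, hc, hsinh⟩ : ∃ c : ℝ, 0 < c ∧ ∀ x ∈ Ici x₀, c * Real.exp x ≤ Real.sinh x := by
    refine ⟨(1 - Real.exp (-(2 * x₀))) / 2, ?_, ?_⟩
    · have : Real.exp (-(2 * x₀)) < 1 := Real.exp_lt_one_iff.2 (by linarith)
      linarith
    · intro x hx
      have hx' : x₀ ≤ x := hx
      have h1 : Real.exp (-x) ≤ Real.exp (-(2 * x₀)) * Real.exp x := by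
        rw [← Real.exp_add]
        exact Real.exp_le_exp.2 (by linarith)
      rw [Real.sinh_eq]
      linarith
  refine ⟨256 * A ^ 3 / c ^ 2, by positivity, fun x hx => ?_⟩
  have hx0 : 0 < x := hx₀.trans_le hx
  have hs : 0 < Real.sinh x := Real.sinh_pos_iff.2 hx0
  -- `1 + x ≤ 4 (1 + x / 4) ≤ 4 exp (x / 4)`, raised to the fourth power
  have hpoly : (1 + x) ^ 4 ≤ 256 * Real.exp x := by
    have h1 : 1 + x ≤ 4 * Real.exp (x / 4) := by
      have := Real.add_one_le_exp (x / 4)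
      linarith
    calc (1 + x) ^ 4 ≤ (4 * Real.exp (x / 4)) ^ 4 := by gcongr
      _ = 256 * Real.exp x := by
        rw [mul_pow, ← Real.exp_nat_mul]
        norm_num
        ring_nf
  have hE := Real.exp_pos x
  calc (1 + x) * |(f x) ^ 3 / (Real.sinh x) ^ 2|
      = (1 + x) * (|f x| ^ 3 / (Real.sinh x) ^ 2) := by
        rw [abs_div, abs_pow, abs_pow, abs_of_pos hs]
    _ ≤ (1 + x) * ((A * (1 + x)) ^ 3 / (c * Real.exp x) ^ 2) := by
        gcongr
        · exact hf x hx
        · exact hsinh x hx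
    _ = A ^ 3 / (c * Real.exp x) ^ 2 * (1 + x) ^ 4 := by ring
    _ ≤ A ^ 3 / (c * Real.exp x) ^ 2 * (256 * Real.exp x) := by gcongr
    _ = 256 * A ^ 3 / c ^ 2 * Real.exp (-x) := by
        rw [Real.exp_neg]
        field_simp

/-- For a `C²` solution of `f'' + f³/sinh²x = 0` on `[x₀,∞)`, the limits
`B = lim (f - x f')` and `D = lim f'` exist and `f(x) - (B + D x) → 0` as `x → ∞`. -/
theorem cubic_wave_linear_asymptotics (x₀ : ℝ) (hx₀ : 0 < x₀) (f : ℝ → ℝ)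
    (hf : ContDiffOn ℝ 2 f (Set.Ici x₀))
    (heq : ∀ x ∈ Set.Ici x₀,
      derivWithin (derivWithin f (Set.Ici x₀)) (Set.Ici x₀) x
        + (f x) ^ 3 / (Real.sinh x) ^ 2 = 0) :
    ∃ B D : ℝ,
      Filter.Tendsto (fun x => f x - x * derivWithin f (Set.Ici x₀) x)
        Filter.atTop (nhds B) ∧
      Filter.Tendsto (fun x => derivWithin f (Set.Ici x₀) x)
        Filter.atTop (nhds D) ∧
      Filter.Tendsto (fun x => f x - (B + D * x)) Filter.atTop (nhds 0) := by
  set h := derivWithin f (Ici x₀) with hdef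
  have hu : UniqueDiffOn ℝ (Ici x₀) := uniqueDiffOn_Ici x₀
  have hfd : ∀ x ∈ Ici x₀, HasDerivWithinAt f (h x) (Ici x₀) x :=
    fun x hx => (hf.differentiableOn (by norm_num) x hx).hasDerivWithinAt
  have hhd : ∀ x ∈ Ici x₀, HasDerivWithinAt h (-((f x) ^ 3 / (Real.sinh x) ^ 2)) (Ici x₀) x := by
    intro x hx
    have h1 : ContDiffOn ℝ 1 h (Ici x₀) := hf.derivWithin hu (by norm_num)
    have h2 := (h1.differentiableOn (by norm_num) x hx).hasDerivWithinAt
    exact h2.congr_deriv (by linarith [heq x hx])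
  obtain ⟨M, hM, hbd⟩ := deriv_bounded hx₀ hfd hhd
  have hlin : ∀ x ∈ Ici x₀, |f x| ≤ (|f x₀| + M) * (1 + x) := by
    intro x hx
    have hx' : x₀ ≤ x := hx
    have h1 := (convex_Ici x₀).norm_image_sub_le_of_norm_hasDerivWithin_le hfd hbd self_mem_Ici hx
    rw [Real.norm_eq_abs, Real.norm_eq_abs, abs_of_nonneg (sub_nonneg.2 hx')] at h1
    have h2 := abs_sub_abs_le_abs_sub (f x) (f x₀)
    have h3 : 0 ≤ |f x₀| * x := mul_nonneg (abs_nonneg _) (hx₀.le.trans hx')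
    have h4 : 0 ≤ M * x₀ := mul_nonneg hM hx₀.le
    linarith
  obtain ⟨K, hK, hdecay⟩ := exp_decay hx₀ (by positivity) hlin
  obtain ⟨D, hD, hDrate⟩ := exists_limit_of_exp_bound hK hhd (by
    intro x hx
    have hx0 : 0 < x := hx₀.trans_le hx
    rw [abs_neg]
    refine le_trans ?_ (hdecay x hx)
    exact le_mul_of_one_le_left (abs_nonneg _) (by linarith))
  obtain ⟨B, hB, -⟩ := exists_limit_of_exp_bound (g := fun x => f x - x * h x)
    (g' := fun x => x * ((f x) ^ 3 / (Real.sinh x) ^ 2)) hK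
    (by
      intro x hx
      exact ((hfd x hx).sub ((hasDerivWithinAt_id x _).mul (hhd x hx))).congr_deriv
        (by simp only [id]; ring))
    (by
      intro x hx
      have hx0 : 0 < x := hx₀.trans_le hx
      rw [abs_mul, abs_of_pos hx0]
      refine le_trans ?_ (hdecay x hx)
      gcongr
      linarith)
  refine ⟨B, D, hB, hD, ?_⟩
  have hxexp : Tendsto (fun x : ℝ => K * (x * Real.exp (-x))) atTop (𝓝 0) := by
    simpa using (Real.tendsto_pow_mul_exp_neg_atTop_nhds_zero 1).const_mul K
  have hxD : Tendsto (fun x => x * (h x - D)) atTop (𝓝 0) := by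
    refine squeeze_zero_norm' ?_ hxexp
    filter_upwards [eventually_ge_atTop x₀] with x hx
    have hx0 : 0 < x := hx₀.trans_le hx
    rw [Real.norm_eq_abs, abs_mul, abs_of_pos hx0]
    calc x * |h x - D| ≤ x * (K * Real.exp (-x)) := by
          gcongr
          exact hDrate x hx
      _ = K * (x * Real.exp (-x)) := by ring
  have hsum := (hB.sub_const B).add hxD
  rw [sub_self, add_zero] at hsum
  refine hsum.congr fun x => ?_
  ring
end

section
/- Let I ⊂ (0,∞) be an open interval and let f : I → ℝ be C² and solve f''(x) + f(x)³/(sinh x)² = 0 on I. Set b(x) = f(x) − x f'(x) and d(x) = f'(x). Then for all x ∈ I the Wronskian-type identity b'(x)·d(x) − b(x)·d'(x) = f(x)⁴/(sinh x)² holds; consequently, wherever b(x)² + d(x)² ≠ 0, the phase φ(x) = arctan(b(x)/d(x)) (any continuous branch) satisfies φ'(x) = f(x)⁴ / ( (sinh x)² (b(x)² + d(x)²) ) ≥ 0. -/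
/-!
Differentiating `b = f - x f'` gives `b' = -x f''`, so `b' d - b d' = -f f''`, which the equation
turns into `f⁴ / sinh² x`.

For the phase, fix `x` and rotate the pair `(b, d)` by the angle `φ x`, so that it becomes
`(p, q)` with `p x = 0` and `q x ≠ 0`. Rotations preserve both `b' d - b d'` and `b² + d²`, and by
continuity of `φ` the relation `tan φ = b / d` becomes `φ = φ x + arctan (p / q)` near `x`. This
shows that `φ` is differentiable at `x` and gives its derivative, even where `d x = 0`
(`hasDerivAt_phase`).
-/

open Filter Topology in
/-- A continuous angle `φ` of the plane curve `(d, b)`, determined up to sign by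
`cos φ * b = sin φ * d`, is differentiable where the curve does not vanish. Only continuity of `φ`
at the point is needed. -/
lemma hasDerivAt_phase {b d φ : ℝ → ℝ} {b' d' x : ℝ} (hb : HasDerivAt b b' x)
    (hd : HasDerivAt d d' x) (hφ : ContinuousAt φ x)
    (h : ∀ᶠ y in 𝓝 x, Real.cos (φ y) * b y = Real.sin (φ y) * d y)
    (h0 : b x ^ 2 + d x ^ 2 ≠ 0) :
    HasDerivAt φ ((b' * d x - b x * d') / (b x ^ 2 + d x ^ 2)) x := by
  have hsc := Real.sin_sq_add_cos_sq (φ x)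
  have hx := h.self_of_nhds
  set c := Real.cos (φ x) with hc
  set s := Real.sin (φ x) with hs
  have hp : HasDerivAt (fun y => c * b y - s * d y) (c * b' - s * d') x :=
    (hb.const_mul c).sub (hd.const_mul s)
  have hq : HasDerivAt (fun y => s * b y + c * d y) (s * b' + c * d') x :=
    (hb.const_mul s).add (hd.const_mul c)
  have hp0 : c * b x - s * d x = 0 := by linarith
  have hqsq : (s * b x + c * d x) ^ 2 = b x ^ 2 + d x ^ 2 := by
    linear_combination (b x ^ 2 + d x ^ 2) * hsc - (c * b x - s * d x) * hp0
  have hq0 : s * b x + c * d x ≠ 0 := by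
    intro h1
    apply h0
    rw [← hqsq, h1]
    norm_num
  have key := ((hp.fun_div hq hq0).arctan).const_add (φ x)
  have hφ' : ∀ᶠ y in 𝓝 x, φ y - φ x ∈ Set.Ioo (-(Real.pi / 2)) (Real.pi / 2) := by
    have h1 : Tendsto (fun y => φ y - φ x) (𝓝 x) (𝓝 0) := by
      simpa using hφ.tendsto.sub_const (φ x)
    exact h1 (Ioo_mem_nhds (by linarith [Real.pi_pos]) (by linarith [Real.pi_pos]))
  have heq : φ =ᶠ[𝓝 x]
      fun y => φ x + Real.arctan ((c * b y - s * d y) / (s * b y + c * d y)) := by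
    filter_upwards [hφ', h, hq.continuousAt.eventually_ne hq0] with y hy h1 h2
    have hcos := Real.cos_pos_of_mem_Ioo hy
    have htan : Real.tan (φ y - φ x) = (c * b y - s * d y) / (s * b y + c * d y) := by
      rw [Real.tan_eq_sin_div_cos, div_eq_div_iff hcos.ne' h2, Real.sin_sub, Real.cos_sub,
        ← hc, ← hs]
      linear_combination (Real.sin (φ y) * d y - Real.cos (φ y) * b y) * hsc - h1
    rw [← htan, Real.arctan_tan hy.1 hy.2]
    ring
  refine (key.congr_of_eventuallyEq heq).congr_deriv ?_
  rw [hp0, ← hqsq]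
  rw [zero_div, zero_pow two_ne_zero, add_zero, div_one, one_mul, zero_mul, sub_zero]
  congr 1
  linear_combination (b' * d x - b x * d') * hsc + (s * b' + c * d') * hp0

/-- For a `C²` solution of `f'' + f³/sinh²x = 0` on an open interval `I ⊆ (0,∞)`:
with `b = f - x f'` and `d = f'`, the Wronskian identity `b'd - bd' = f⁴/sinh²x`
holds, and wherever `b² + d² ≠ 0` any continuous branch of the phase
`φ = arctan(b/d)` satisfies `φ' = f⁴/(sinh²x (b² + d²)) ≥ 0`. -/
theorem cubic_wave_phase_monotone (a β : ℝ) (ha : 0 ≤ a) (f : ℝ → ℝ)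
    (hf : ContDiffOn ℝ 2 f (Set.Ioo a β))
    (heq : ∀ x ∈ Set.Ioo a β,
      deriv (deriv f) x + (f x) ^ 3 / (Real.sinh x) ^ 2 = 0) :
    (∀ x ∈ Set.Ioo a β,
      deriv (fun y => f y - y * deriv f y) x * deriv f x
        - (f x - x * deriv f x) * deriv (deriv f) x
        = (f x) ^ 4 / (Real.sinh x) ^ 2) ∧
    (∀ x ∈ Set.Ioo a β,
      (f x - x * deriv f x) ^ 2 + (deriv f x) ^ 2 ≠ 0 →
      (∀ φ : ℝ → ℝ, ContinuousOn φ (Set.Ioo a β) →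
        (∀ y ∈ Set.Ioo a β,
          Real.cos (φ y) * (f y - y * deriv f y) = Real.sin (φ y) * deriv f y) →
        HasDerivAt φ
          ((f x) ^ 4 /
            ((Real.sinh x) ^ 2 * ((f x - x * deriv f x) ^ 2 + (deriv f x) ^ 2))) x) ∧
      0 ≤ (f x) ^ 4 /
            ((Real.sinh x) ^ 2 * ((f x - x * deriv f x) ^ 2 + (deriv f x) ^ 2))) := by
  have h1 : ∀ x ∈ Set.Ioo a β, HasDerivAt f (deriv f x) x := fun x hx =>
    ((hf.contDiffAt (isOpen_Ioo.mem_nhds hx)).differentiableAt (by norm_num)).hasDerivAt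
  have h2 : ∀ x ∈ Set.Ioo a β, HasDerivAt (deriv f) (deriv (deriv f) x) x := fun x hx =>
    ((((contDiffOn_succ_iff_deriv_of_isOpen (n := 1) isOpen_Ioo).1 hf).2.2.contDiffAt
      (isOpen_Ioo.mem_nhds hx)).differentiableAt (by norm_num)).hasDerivAt
  have hb : ∀ x ∈ Set.Ioo a β,
      HasDerivAt (fun y => f y - y * deriv f y) (-(x * deriv (deriv f) x)) x := fun x hx =>
    ((h1 x hx).fun_sub ((hasDerivAt_id' x).fun_mul (h2 x hx))).congr_deriv (by ring)
  have hW : ∀ x ∈ Set.Ioo a β,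
      -(x * deriv (deriv f) x) * deriv f x - (f x - x * deriv f x) * deriv (deriv f) x
        = (f x) ^ 4 / (Real.sinh x) ^ 2 := fun x hx => by
    linear_combination -f x * heq x hx
  refine ⟨fun x hx => ?_, fun x hx h0 => ⟨fun φ hφ h => ?_, by positivity⟩⟩
  · rw [(hb x hx).deriv, hW x hx]
  · have hI := isOpen_Ioo.mem_nhds hx
    refine (hasDerivAt_phase (hb x hx) (h2 x hx) (hφ.continuousAt hI)
      (Filter.eventually_of_mem hI h) h0).congr_deriv ?_
    rw [hW x hx, div_div]
end

section
/- For all real numbers U and R with 0 ≤ U ≤ √2 and 0 ≤ R ≤ 1, setting Δ = 1 − R²(1−R²)(2+U²), one has Δ ≥ 0 and N(U,R) := (Δ + R²)(1 − 2R² + √Δ) + (1 − R²)·R⁴·(U² − 2) ≥ 0. -/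
/-!
Write `x = R²` and `s = √Δ`. Since `Δ = (1-2x)² + x(1-x)(2-U²)`, one has `s ≥ |1-2x|`, and
replacing `x(1-x)(2-U²)` by `s² - (1-2x)²` makes the expression `N` factor as
`(s + 1 - 2x) (s² - x s + 2x(1-x))`. The first factor is nonnegative because `s ≥ 2x-1`, the
second by `quadratic_factor_nonneg`.
-/

theorem quadratic_factor_nonneg {x s : ℝ} (hx0 : 0 ≤ x) (hx1 : x ≤ 1)
    (hs : 2 * x - 1 ≤ s) : 0 ≤ s ^ 2 - x * s + 2 * x * (1 - x) := by
  rcases le_total (1 - x) s with h | h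
  · -- The quadratic equals `(s - (2x-1)) (s - (1-x)) + (1-x)`.
    nlinarith [mul_nonneg (sub_nonneg.2 hs) (sub_nonneg.2 h)]
  · -- Here `x s ≤ x (1-x)`.
    nlinarith [mul_nonneg hx0 (sub_nonneg.2 h), mul_nonneg hx0 (sub_nonneg.2 hx1), sq_nonneg s]

/-- The key elementary inequality: for `0 ≤ U ≤ √2` and `0 ≤ R ≤ 1`, with
`Δ = 1 - R²(1-R²)(2+U²)`, one has `Δ ≥ 0` and
`N(U,R) = (Δ+R²)(1-2R²+√Δ) + (1-R²)R⁴(U²-2) ≥ 0`. -/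
theorem cubic_wave_key_inequality (U R : ℝ) (hU0 : 0 ≤ U) (hU2 : U ≤ Real.sqrt 2)
    (hR0 : 0 ≤ R) (hR1 : R ≤ 1) :
    0 ≤ 1 - R ^ 2 * (1 - R ^ 2) * (2 + U ^ 2) ∧
    0 ≤ (1 - R ^ 2 * (1 - R ^ 2) * (2 + U ^ 2) + R ^ 2)
          * (1 - 2 * R ^ 2 + Real.sqrt (1 - R ^ 2 * (1 - R ^ 2) * (2 + U ^ 2)))
        + (1 - R ^ 2) * R ^ 4 * (U ^ 2 - 2) := by
  have hU : U ^ 2 ≤ 2 := (Real.le_sqrt hU0 (by norm_num)).1 hU2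
  have hx0 : 0 ≤ R ^ 2 := sq_nonneg R
  have hx1 : R ^ 2 ≤ 1 := pow_le_one₀ hR0 hR1
  have hy : 0 ≤ R ^ 2 * (1 - R ^ 2) * (2 - U ^ 2) :=
    mul_nonneg (mul_nonneg hx0 (sub_nonneg.2 hx1)) (sub_nonneg.2 hU)
  have hle : (2 * R ^ 2 - 1) ^ 2 ≤ 1 - R ^ 2 * (1 - R ^ 2) * (2 + U ^ 2) := by linarith
  have hD : 0 ≤ 1 - R ^ 2 * (1 - R ^ 2) * (2 + U ^ 2) := (sq_nonneg _).trans hle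
  refine ⟨hD, ?_⟩
  have hs : 2 * R ^ 2 - 1 ≤ √(1 - R ^ 2 * (1 - R ^ 2) * (2 + U ^ 2)) := Real.le_sqrt_of_sq_le hle
  have hsq := Real.sq_sqrt hD
  -- `s` becomes a free variable, tied to `U` and `R` only through `s² = Δ`.
  generalize √(1 - R ^ 2 * (1 - R ^ 2) * (2 + U ^ 2)) = s at hs hsq ⊢
  have hN := mul_nonneg (sub_nonneg.2 hs) (quadratic_factor_nonneg hx0 hx1 hs)
  linear_combination hN + (1 - 2 * R ^ 2 + s - R ^ 2) * hsq
end
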